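/- Fix t > 0, l ∈ ℕ, θ ∈ (0,1], M > 0. Let c : [0,t] × ℝˡ → ℝ^{l×l} be measurable with symmetric values satisfying θ|y|² ≤ yᵀc_s(x)y ≤ θ^{-1}|y|² for all s, x, y, with c_s(·) of class C¹ and the first partial derivatives of c_s bounded uniformly over s ∈ [0,t]. Let a : [0,t] × ℝˡ → ℝˡ be measurable with |a_s(x)| ≤ M(1 + |x|) for all s ∈ [0,t], x ∈ ℝˡ. Let m : [0,t] × ℝˡ → [0,∞) be measurable such that for a.e. s, m_s(·) is a probability density in W^{1,1}_loc(ℝˡ), and ∫₀ᵗ ∫_{ℝˡ} |Dm_s(x)|²/m_s(x) dx ds < ∞. Suppose that for some L > 0: ∫₀ᵗ sup_h ∫_{ℝˡ} ( Dh(x)ᵀ( ½ div(c_s(x)m_s(x)) − a_s(x)m_s(x) ) − ½ Dh(x)ᵀ c_s(x) Dh(x) m_s(x) ) dx ds ≤ L, where the supremum is over compactly supported Lipschitz functions h : ℝˡ → ℝ (Dh being the a.e. gradient) and div(c_s m_s) = (div c_s)m_s + c_s Dm_s weakly. Assume additionally that either (i) limsup_{|x|→∞} sup_{s∈[0,t]}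 a_s(x)·x/|x|² < 0, or (ii) for almost every s ∈ [0,t] there exists â_s ∈ W^{1,1}_loc(ℝˡ) with c_s(x)^{-1}( a_s(x) − ½ div c_s(x) ) = Dâ_s(x) for almost every x ∈ ℝˡ. Then ∫₀ᵗ ∫_{ℝˡ} |a_s(x)|² m_s(x) dx ds < ∞. -/

import Mathlib

open MeasureTheory Filter Set Topology RealInnerProductSpace

variable {l : ℕ}

/-- `g` is the weak (Sobolev) gradient of `f` on `ℝˡ`; in particular `f ∈ W^{1,1}_loc`. -/
def HasWeakGrad (f : EuclideanSpace ℝ (Fin l) → ℝ)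
    (g : EuclideanSpace ℝ (Fin l) → EuclideanSpace ℝ (Fin l)) : Prop :=
  LocallyIntegrable f volume ∧ LocallyIntegrable g volume ∧
    ∀ p : EuclideanSpace ℝ (Fin l) → ℝ, ContDiff ℝ (⊤ : ℕ∞) p → HasCompactSupport p →
      ∀ v : EuclideanSpace ℝ (Fin l),
        (∫ x, f x * fderiv ℝ p x v) = - ∫ x, ⟪g x, v⟫ * p x

/-- The rowwise divergence `div c` of an operator-valued (matrix-valued) field `c`. -/
noncomputable def matDiv (c : EuclideanSpace ℝ (Fin l) →
      (EuclideanSpace ℝ (Fin l) →L[ℝ] EuclideanSpace ℝ (Fin l)))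
    (x : EuclideanSpace ℝ (Fin l)) : EuclideanSpace ℝ (Fin l) :=
  ∑ j : Fin l, (fderiv ℝ c x (EuclideanSpace.single j (1 : ℝ)))
    (EuclideanSpace.single j (1 : ℝ))

/-!
Write `Dm = m z`, so that `∫ |z|² m` is the Fisher information. Testing the variational functional
with `h` bounds `∫ (⟪Dh, ½ (div c + c z) - a⟫ - ½ ⟪c Dh, Dh⟫) m`, and the task is to choose `h` so
that the integrand controls `|a|² m` up to multiples of `m` and `|z|² m`.

If `a` is dissipative, let `h` be a small multiple of `|x|² ∧ k²`. Then `-⟪Dh, a⟫` is at least a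
multiple of `|x|²` on the ball of radius `k` up to a constant, and for a small multiple it absorbs
the quadratic term. Letting `k → ∞` bounds the second moment of `m`, hence `∫ |a|² m` by linear
growth.

If `a = ½ div c + c b` with `b = Dâ`, then `h = -â` would turn the integrand into
`½ ⟪c b, b⟫ - ½ ⟪b, c z⟫`, which controls `|b|²`. Since `â` need be neither bounded nor compactly
supported, `h = -χ_r T_k(â)` with a cutoff `χ_r` and a bounded truncation `T_k` is used instead:
`Dχ_r = O(1/r)` compensates the linear growth of `b`. Since `â` is only weakly differentiable, such
an `h` is reached by mollification.

The resulting bounds are affine in the rate and the Fisher information at a fixed time, with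
constants independent of time, and are integrated over time.
-/

open scoped Convolution Gradient

local notation "ℝ^" n:max => EuclideanSpace ℝ (Fin n)

section Limits

variable {α F : Type*} [MeasurableSpace α] {μ : Measure α} [NormedAddCommGroup F]

theorem lintegral_le_of_ae_tendsto {f : ℕ → α → ENNReal} {g : α → ENNReal} {b : ℕ → ENNReal}
    {B : ENNReal} (hf : ∀ n, AEMeasurable (f n) μ)
    (hfg : ∀ᵐ x ∂μ, Tendsto (fun n => f n x) atTop (𝓝 (g x)))
    (hfb : ∀ n, ∫⁻ x, f n x ∂μ ≤ b n) (hb : Tendsto b atTop (𝓝 B)) : ∫⁻ x, g x ∂μ ≤ B :=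
  calc ∫⁻ x, g x ∂μ = ∫⁻ x, liminf (fun n => f n x) atTop ∂μ :=
        lintegral_congr_ae (hfg.mono fun x hx => hx.liminf_eq.symm)
    _ ≤ liminf (fun n => ∫⁻ x, f n x ∂μ) atTop := lintegral_liminf_le' hf
    _ ≤ liminf b atTop := liminf_le_liminf (Eventually.of_forall hfb)
    _ = B := hb.liminf_eq

theorem lintegral_ofReal_le_ofReal_integral_add {v w e : α → ℝ} (hv : 0 ≤ᵐ[μ] v)
    (hw : Integrable w μ) (he : AEStronglyMeasurable e μ) (he0 : 0 ≤ᵐ[μ] e)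
    (hvw : v ≤ᵐ[μ] w + e) :
    ∫⁻ x, ENNReal.ofReal (v x) ∂μ ≤
      ENNReal.ofReal (∫ x, w x ∂μ) + ∫⁻ x, ENNReal.ofReal (e x) ∂μ := by
  by_cases htop : ∫⁻ x, ENNReal.ofReal (e x) ∂μ = ⊤
  · simp [htop]
  have hei : Integrable e μ := (lintegral_ofReal_ne_top_iff_integrable he he0).1 htop
  calc ∫⁻ x, ENNReal.ofReal (v x) ∂μ
      ≤ ∫⁻ x, ENNReal.ofReal ((w + e) x) ∂μ :=
        lintegral_mono_ae (hvw.mono fun x hx => ENNReal.ofReal_le_ofReal hx)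
    _ = ENNReal.ofReal (∫ x, w x ∂μ + ∫ x, e x ∂μ) := by
        rw [← ofReal_integral_eq_lintegral_ofReal (hw.add hei) (hv.trans hvw),
          integral_add' hw hei]
    _ ≤ ENNReal.ofReal (∫ x, w x ∂μ) + ENNReal.ofReal (∫ x, e x ∂μ) := ENNReal.ofReal_add_le
    _ = _ := by rw [ofReal_integral_eq_lintegral_ofReal hei he0]

/- The functions `(2 G₀ - (G n + G₀ - ‖f n - f₀‖))⁺` are dominated by `2 G₀`. -/
theorem tendsto_integral_norm_sub_of_tendsto_integral_bound {f : ℕ → α → F} {f₀ : α → F}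
    {G : ℕ → α → ℝ} {G₀ : α → ℝ} (hf : ∀ n, AEStronglyMeasurable (f n) μ)
    (hG : ∀ n, Integrable (G n) μ) (hG₀ : Integrable G₀ μ)
    (hfG : ∀ n, ∀ᵐ x ∂μ, ‖f n x‖ ≤ G n x)
    (hf_lim : ∀ᵐ x ∂μ, Tendsto (fun n => f n x) atTop (𝓝 (f₀ x)))
    (hG_lim : ∀ᵐ x ∂μ, Tendsto (fun n => G n x) atTop (𝓝 (G₀ x)))
    (hG_int : Tendsto (fun n => ∫ x, G n x ∂μ) atTop (𝓝 (∫ x, G₀ x ∂μ))) :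
    Tendsto (fun n => ∫ x, ‖f n x - f₀ x‖ ∂μ) atTop (𝓝 0) := by
  have hf₀ : AEStronglyMeasurable f₀ μ := aestronglyMeasurable_of_tendsto_ae _ hf hf_lim
  have hf₀G : ∀ᵐ x ∂μ, ‖f₀ x‖ ≤ G₀ x := by
    filter_upwards [hf_lim, hG_lim, ae_all_iff.2 hfG] with x hfx hGx hx
    exact le_of_tendsto_of_tendsto' hfx.norm hGx hx
  have hd_le : ∀ n, ∀ᵐ x ∂μ, ‖f n x - f₀ x‖ ≤ G n x + G₀ x := fun n => by
    filter_upwards [hfG n, hf₀G] with x hn h₀ using (norm_sub_le _ _).trans (add_le_add hn h₀)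
  have hd : ∀ n, Integrable (fun x => ‖f n x - f₀ x‖) μ := fun n =>
    (((hG n).add hG₀).mono' ((hf n).sub hf₀) (hd_le n)).norm
  let e : ℕ → α → ℝ := fun n x => max (2 * G₀ x - (G n x + G₀ x - ‖f n x - f₀ x‖)) 0
  have he : ∀ n, Integrable (e n) μ := fun n =>
    ((hG₀.const_mul 2).sub (((hG n).add hG₀).sub (hd n))).pos_part
  have he_lim : Tendsto (fun n => ∫ x, e n x ∂μ) atTop (𝓝 0) := by
    rw [← integral_zero α ℝ]
    refine tendsto_integral_of_dominated_convergence (fun x => 2 * G₀ x)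
      (fun n => (he n).aestronglyMeasurable) (hG₀.const_mul 2) (fun n => ?_) ?_
    · filter_upwards [hd_le n, hf₀G] with x hx h₀
      rw [Real.norm_of_nonneg (le_max_right _ _)]
      exact max_le (by linarith) (by linarith [norm_nonneg (f₀ x)])
    · filter_upwards [hf_lim, hG_lim] with x hfx hGx
      have := ((tendsto_const_nhds (x := 2 * G₀ x)).sub ((hGx.add_const (G₀ x)).sub
        (hfx.sub_const (f₀ x)).norm)).max (tendsto_const_nhds (x := (0 : ℝ)))
      simpa [e, two_mul] using this
  refine squeeze_zero (fun n => by positivity) (fun n => ?_)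
    (by simpa using (hG_int.sub_const (∫ x, G₀ x ∂μ)).add he_lim)
  rw [← integral_sub' (hG n) hG₀, ← integral_add ((hG n).sub hG₀) (he n)]
  exact integral_mono (hd n) (((hG n).sub hG₀).add (he n)) fun x => by
    simp only [Pi.sub_apply, e]
    linarith [le_max_left (2 * G₀ x - (G n x + G₀ x - ‖f n x - f₀ x‖)) 0]

theorem tendsto_setLIntegral_compl_ball {E : Type*} [PseudoMetricSpace E] [MeasurableSpace E]
    [OpensMeasurableSpace E] {ν : Measure E} {f : E → ENNReal} (hfin : ∫⁻ x, f x ∂ν ≠ ⊤) (x₀ : E) :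
    Tendsto (fun n : ℕ => ∫⁻ x in (Metric.ball x₀ n)ᶜ, f x ∂ν) atTop (𝓝 0) := by
  have h : Tendsto (fun n : ℕ => ν.withDensity f (Metric.ball x₀ n)ᶜ) atTop
      (𝓝 (ν.withDensity f (⋂ n : ℕ, (Metric.ball x₀ n)ᶜ))) := by
    refine tendsto_measure_iInter_atTop
      (fun n => Metric.isOpen_ball.measurableSet.compl.nullMeasurableSet)
      (fun m n hmn => compl_subset_compl.2 (Metric.ball_subset_ball (by exact_mod_cast hmn)))
      ⟨0, ?_⟩
    rw [withDensity_apply _ Metric.isOpen_ball.measurableSet.compl]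
    exact ((setLIntegral_le_lintegral _ _).trans_lt hfin.lt_top).ne
  rw [← compl_iUnion, Metric.iUnion_ball_nat, compl_univ, measure_empty] at h
  simpa only [withDensity_apply _ Metric.isOpen_ball.measurableSet.compl] using h

end Limits

section Mollification

/-- The bump of outer radius `1 / (n + 1)` and inner radius half of it; mollification with
`shrinkingBump n` is an approximation of the identity as `n → ∞`. -/
noncomputable def shrinkingBump {E : Type*} [NormedAddCommGroup E] (n : ℕ) :
    ContDiffBump (0 : E) where
  rIn := 1 / (2 * ((n : ℝ) + 1))
  rOut := 1 / ((n : ℝ) + 1)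
  rIn_pos := by positivity
  rIn_lt_rOut := by gcongr; linarith [Nat.cast_nonneg (α := ℝ) n]

theorem rOut_shrinkingBump_le_one {E : Type*} [NormedAddCommGroup E] (n : ℕ) :
    (shrinkingBump n : ContDiffBump (0 : E)).rOut ≤ 1 :=
  Nat.one_div_le_one_div n.zero_le |>.trans_eq (by simp)

variable {E F : Type*} [NormedAddCommGroup E] [NormedSpace ℝ E] [HasContDiffBump E]
  [FiniteDimensional ℝ E] [MeasurableSpace E] [BorelSpace E]
  [NormedAddCommGroup F] [NormedSpace ℝ F] {μ : Measure E} [μ.IsAddHaarMeasure]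

/-- The mollification of `f`: its convolution with the bump `φ`, normalized to have integral one
for `μ`. -/
noncomputable def mollify (φ : ContDiffBump (0 : E)) (μ : Measure E) (f : E → F) : E → F :=
  φ.normed μ ⋆[ContinuousLinearMap.lsmul ℝ ℝ, μ] f

variable {φ : ContDiffBump (0 : E)} {f : E → F}

theorem mollify_apply (x : E) : mollify φ μ f x = ∫ y, φ.normed μ (x - y) • f y ∂μ :=
  convolution_lsmul_swap

theorem integrable_normed_sub_smul (hf : LocallyIntegrable f μ) (x : E) :
    Integrable (fun y => φ.normed μ (x - y) • f y) μ :=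
  (φ.hasCompactSupport_normed.convolutionExists_left (ContinuousLinearMap.lsmul ℝ ℝ)
    φ.continuous_normed hf x).integrable_swap

theorem contDiff_mollify (hf : LocallyIntegrable f μ) : ContDiff ℝ (⊤ : ℕ∞) (mollify φ μ f) :=
  φ.hasCompactSupport_normed.contDiff_convolution_left _ φ.contDiff_normed hf

theorem integrable_mollify (hf : Integrable f μ) : Integrable (mollify φ μ f) μ :=
  φ.integrable_normed.integrable_convolution _ hf

theorem integral_mollify [CompleteSpace F] (hf : Integrable f μ) :
    ∫ x, mollify φ μ f x ∂μ = ∫ x, f x ∂μ := by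
  refine (integral_convolution (ContinuousLinearMap.lsmul ℝ ℝ) φ.integrable_normed hf).trans ?_
  rw [φ.integral_normed, ContinuousLinearMap.lsmul_apply, one_smul]

theorem normed_sub_eq_zero {x y : E} (h : φ.rOut ≤ dist y x) : φ.normed μ (x - y) = 0 := by
  rw [← Function.notMem_support, φ.support_normed_eq, mem_ball_zero_iff, not_lt, ← dist_eq_norm']
  exact h

theorem mollify_congr {f' : E → F} {x : E} (h : ∀ y ∈ Metric.ball x φ.rOut, f y = f' y) :
    mollify φ μ f x = mollify φ μ f' x := by
  rw [mollify_apply, mollify_apply]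
  refine integral_congr_ae (Eventually.of_forall fun y => ?_)
  by_cases hy : y ∈ Metric.ball x φ.rOut
  · simp only [h y hy]
  · simp only [normed_sub_eq_zero (not_lt.1 hy), zero_smul]

theorem tsupport_mollify_subset {r : ℝ} (h : tsupport f ⊆ Metric.closedBall 0 r) :
    tsupport (mollify φ μ f) ⊆ Metric.closedBall 0 (r + φ.rOut) := by
  refine closure_minimal (fun x hx => by_contra fun hxr => hx ?_) Metric.isClosed_closedBall
  have hf : ∀ y ∈ Metric.ball x φ.rOut, f y = (0 : E → F) y := fun y hy =>
    image_eq_zero_of_notMem_tsupport fun hyf => hxr <| by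
      rw [Metric.mem_closedBall, add_comm]
      exact (dist_triangle_left x 0 y).trans
        (add_le_add (Metric.mem_ball.1 hy).le (Metric.mem_closedBall.1 (h hyf)))
  rw [mollify_congr hf, mollify_apply]
  simp

theorem norm_mollify_le_mollify_norm (x : E) :
    ‖mollify φ μ f x‖ ≤ mollify φ μ (fun y => ‖f y‖) x := by
  rw [mollify_apply, mollify_apply]
  refine (norm_integral_le_integral_norm _).trans_eq ?_
  simp only [norm_smul, Real.norm_of_nonneg (φ.nonneg_normed _), smul_eq_mul]

theorem norm_mollify_le {B : ℝ} (hB : ∀ᵐ y ∂μ, ‖f y‖ ≤ B) (x : E) : ‖mollify φ μ f x‖ ≤ B := by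
  rw [mollify_apply]
  calc ‖∫ y, φ.normed μ (x - y) • f y ∂μ‖ ≤ ∫ y, φ.normed μ (x - y) * B ∂μ := by
        refine norm_integral_le_of_norm_le ((φ.integrable_normed.comp_sub_left x).mul_const B) ?_
        filter_upwards [hB] with y hy
        rw [norm_smul, Real.norm_of_nonneg (φ.nonneg_normed _)]
        exact mul_le_mul_of_nonneg_left hy (φ.nonneg_normed _)
    _ = B := by
        rw [integral_mul_const, integral_sub_left_eq_self (φ.normed μ), φ.integral_normed, one_mul]

variable [CompleteSpace F]

theorem ae_tendsto_mollify (hf : LocallyIntegrable f μ) :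
    ∀ᵐ x ∂μ, Tendsto (fun n => mollify (shrinkingBump n) μ f x) atTop (𝓝 (f x)) := by
  refine ContDiffBump.ae_convolution_tendsto_right_of_locallyIntegrable (K := 2)
    tendsto_one_div_add_atTop_nhds_zero_nat (Eventually.of_forall fun n => le_of_eq ?_) hf
  change 1 / ((n : ℝ) + 1) = 2 * (1 / (2 * ((n : ℝ) + 1)))
  field_simp

theorem tendsto_integral_norm_mollify_sub (hf : Integrable f μ) :
    Tendsto (fun n => ∫ x, ‖mollify (shrinkingBump n) μ f x - f x‖ ∂μ) atTop (𝓝 0) := by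
  refine tendsto_integral_norm_sub_of_tendsto_integral_bound
    (G := fun n => mollify (shrinkingBump n) μ fun y => ‖f y‖) (G₀ := fun y => ‖f y‖)
    (fun n => (integrable_mollify hf).aestronglyMeasurable) (fun n => integrable_mollify hf.norm)
    hf.norm (fun n => ae_of_all _ norm_mollify_le_mollify_norm)
    (ae_tendsto_mollify hf.locallyIntegrable) (ae_tendsto_mollify hf.norm.locallyIntegrable) ?_
  simp only [integral_mollify hf.norm, tendsto_const_nhds]

end Mollification

theorem locallyIntegrable_norm {E F : Type*} [TopologicalSpace E] [MeasurableSpace E]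
    [NormedAddCommGroup F] {μ : Measure E} {f : E → F} (hf : LocallyIntegrable f μ) :
    LocallyIntegrable (fun x => ‖f x‖) μ := fun x =>
  let ⟨s, hs, hfs⟩ := hf x
  ⟨s, hs, hfs.norm⟩

theorem integrable_inner_of_hasCompactSupport {E V : Type*} [TopologicalSpace E]
    [MeasurableSpace E] [OpensMeasurableSpace E] [SecondCountableTopology E]
    [NormedAddCommGroup V] [InnerProductSpace ℝ V] {μ : Measure E} {u q : E → V}
    (hu : LocallyIntegrable u μ) (hq : Continuous q) (hqc : HasCompactSupport q) :
    Integrable (fun x => ⟪u x, q x⟫) μ := by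
  obtain ⟨B, hB⟩ := hqc.exists_bound_of_continuous hq
  have hsupp : Function.support (fun x => ⟪u x, q x⟫) ⊆ tsupport q := fun x hx =>
    subset_tsupport q fun h0 => hx (by simp only [h0, inner_zero_right])
  refine (integrableOn_iff_integrable_of_support_subset hsupp).1 ?_
  have huK : IntegrableOn u (tsupport q) μ := hu.integrableOn_isCompact hqc.isCompact
  exact (huK.norm.mul_const B).mono' (huK.aestronglyMeasurable.inner hq.aestronglyMeasurable)
    (ae_of_all _ fun x => (norm_inner_le_norm _ _).trans
      (mul_le_mul_of_nonneg_left (hB x) (norm_nonneg _)))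

theorem locallyIntegrable_comp_of_lipschitzWith {E F F' : Type*} [TopologicalSpace E]
    [MeasurableSpace E] [SecondCountableTopology E]
    [NormedAddCommGroup F] [NormedAddCommGroup F'] {μ : Measure E} [IsLocallyFiniteMeasure μ]
    {f : E → F} {T : F → F'} {C : NNReal} (hT : LipschitzWith C T) (hf : LocallyIntegrable f μ) :
    LocallyIntegrable (fun x => T (f x)) μ := by
  refine ((locallyIntegrable_const ‖T 0‖).add ((locallyIntegrable_norm hf).smul (C : ℝ))).mono
    (hT.continuous.comp_aestronglyMeasurable hf.aestronglyMeasurable) (ae_of_all _ fun x => ?_)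
  refine le_trans ?_ (le_abs_self _)
  have h := hT.norm_sub_le (f x) 0
  rw [sub_zero] at h
  simpa using (norm_le_norm_add_norm_sub' (T (f x)) (T 0)).trans (add_le_add_right h _)

/-- Convergence in `L¹` on every compact set, of locally integrable functions to a locally
integrable function. -/
structure TendstoL1Loc {E F : Type*} [TopologicalSpace E] [MeasurableSpace E]
    [NormedAddCommGroup F] (μ : Measure E) (f : ℕ → E → F) (f₀ : E → F) : Prop where
  locallyIntegrable : ∀ n, LocallyIntegrable (f n) μ
  locallyIntegrable_lim : LocallyIntegrable f₀ μ
  tendsto : ∀ K, IsCompact K → Tendsto (fun n => ∫ x in K, ‖f n x - f₀ x‖ ∂μ) atTop (𝓝 0)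

namespace TendstoL1Loc

section

variable {E F F' : Type*} [TopologicalSpace E] [MeasurableSpace E] [NormedAddCommGroup F]
  [NormedAddCommGroup F'] {μ : Measure E} {f : ℕ → E → F} {f₀ : E → F}

theorem integrableOn_norm_sub (h : TendstoL1Loc μ f f₀) (n : ℕ) {K : Set E} (hK : IsCompact K) :
    IntegrableOn (fun x => ‖f n x - f₀ x‖) K μ :=
  ((h.locallyIntegrable n).sub h.locallyIntegrable_lim).integrableOn_isCompact hK |>.norm

theorem of_norm_sub_le (hf : ∀ n, LocallyIntegrable (f n) μ) (hf₀ : LocallyIntegrable f₀ μ)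
    {e : ℕ → E → ℝ} (he : ∀ n K, IsCompact K → IntegrableOn (e n) K μ)
    (hle : ∀ n x, ‖f n x - f₀ x‖ ≤ e n x)
    (h0 : ∀ K, IsCompact K → Tendsto (fun n => ∫ x in K, e n x ∂μ) atTop (𝓝 0)) :
    TendstoL1Loc μ f f₀ where
  locallyIntegrable := hf
  locallyIntegrable_lim := hf₀
  tendsto K hK := squeeze_zero (fun _ => by positivity)
    (fun n => integral_mono (((hf n).sub hf₀).integrableOn_isCompact hK).norm (he n K hK)
      (hle n)) (h0 K hK)

theorem of_dominated {G : E → ℝ} (hG : LocallyIntegrable G μ)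
    (hf : ∀ n, AEStronglyMeasurable (f n) μ) (hfG : ∀ n x, ‖f n x‖ ≤ G x)
    (hlim : ∀ᵐ x ∂μ, Tendsto (fun n => f n x) atTop (𝓝 (f₀ x))) : TendstoL1Loc μ f f₀ := by
  have hf₀ : AEStronglyMeasurable f₀ μ := aestronglyMeasurable_of_tendsto_ae _ hf hlim
  have hf₀G : ∀ᵐ x ∂μ, ‖f₀ x‖ ≤ G x :=
    hlim.mono fun x hx => le_of_tendsto' hx.norm fun n => hfG n x
  refine ⟨fun n => hG.mono (hf n) (ae_of_all _ fun x => (hfG n x).trans (le_abs_self _)),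
    hG.mono hf₀ (hf₀G.mono fun x hx => hx.trans (le_abs_self _)), fun K hK => ?_⟩
  rw [← integral_zero E ℝ]
  refine tendsto_integral_of_dominated_convergence (fun x => 2 * G x)
    (fun n => ((hf n).sub hf₀).norm.restrict) ((hG.integrableOn_isCompact hK).const_mul 2)
    (fun n => ?_) ?_
  · filter_upwards [ae_restrict_of_ae hf₀G] with x hx
    rw [norm_norm, two_mul]
    exact (norm_sub_le _ _).trans (add_le_add (hfG n x) hx)
  · filter_upwards [ae_restrict_of_ae hlim] with x hx
    simpa using (hx.sub_const (f₀ x)).norm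

theorem tendsto_integral_inner [OpensMeasurableSpace E] [SecondCountableTopology E]
    {V : Type*} [NormedAddCommGroup V] [InnerProductSpace ℝ V] {f : ℕ → E → V} {f₀ : E → V}
    (h : TendstoL1Loc μ f f₀) {q : E → V} (hq : Continuous q) (hqc : HasCompactSupport q) :
    Tendsto (fun n => ∫ x, ⟪f n x, q x⟫ ∂μ) atTop (𝓝 (∫ x, ⟪f₀ x, q x⟫ ∂μ)) := by
  obtain ⟨B, hB⟩ := hqc.exists_bound_of_continuous hq
  have hint : ∀ {u : E → V}, LocallyIntegrable u μ → Integrable (fun x => ⟪u x, q x⟫) μ :=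
    fun hu => integrable_inner_of_hasCompactSupport hu hq hqc
  rw [tendsto_iff_norm_sub_tendsto_zero]
  refine squeeze_zero (fun _ => norm_nonneg _) (fun n => ?_)
    (by simpa using (h.tendsto _ hqc.isCompact).mul_const B)
  rw [← integral_sub (hint (h.locallyIntegrable n)) (hint h.locallyIntegrable_lim),
    ← integral_mul_const, ← setIntegral_eq_integral_of_forall_compl_eq_zero (s := tsupport q)]
  · refine norm_integral_le_of_norm_le ((h.integrableOn_norm_sub n hqc.isCompact).mul_const B)
      (ae_of_all _ fun x => ?_)
    rw [← inner_sub_left]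
    exact (norm_inner_le_norm _ _).trans (mul_le_mul_of_nonneg_left (hB x) (norm_nonneg _))
  · intro x hx
    rw [image_eq_zero_of_notMem_tsupport hx, inner_zero_right, inner_zero_right, sub_zero]

variable [SecondCountableTopology E]

theorem smul [NormedSpace ℝ F] (h : TendstoL1Loc μ f f₀) {b : ℕ → E → ℝ} {b₀ : E → ℝ} {B : ℝ}
    (hb : ∀ n, AEStronglyMeasurable (b n) μ) (hbB : ∀ n x, ‖b n x‖ ≤ B)
    (hlim : ∀ᵐ x ∂μ, Tendsto (fun n => b n x) atTop (𝓝 (b₀ x))) :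
    TendstoL1Loc μ (fun n x => b n x • f n x) (fun x => b₀ x • f₀ x) := by
  have hle : ∀ n x (y : F), ‖b n x • y‖ ≤ B * ‖y‖ := fun n x y => by
    rw [norm_smul]; exact mul_le_mul_of_nonneg_right (hbB n x) (norm_nonneg _)
  have hbf₀ : TendstoL1Loc μ (fun n x => b n x • f₀ x) (fun x => b₀ x • f₀ x) :=
    of_dominated ((locallyIntegrable_norm h.locallyIntegrable_lim).smul B)
      (fun n => (hb n).smul h.locallyIntegrable_lim.aestronglyMeasurable)
      (fun n x => hle n x (f₀ x)) (hlim.mono fun x hx => hx.smul_const (f₀ x))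
  refine of_norm_sub_le
    (e := fun n x => B * ‖f n x - f₀ x‖ + ‖b n x • f₀ x - b₀ x • f₀ x‖)
    (fun n => ((locallyIntegrable_norm (h.locallyIntegrable n)).smul B).mono
      ((hb n).smul (h.locallyIntegrable n).aestronglyMeasurable)
      (ae_of_all _ fun x => (hle n x (f n x)).trans (le_abs_self _)))
    hbf₀.locallyIntegrable_lim
    (fun n K hK => ((h.integrableOn_norm_sub n hK).const_mul B).add
      (hbf₀.integrableOn_norm_sub n hK)) (fun n x => ?_) fun K hK => ?_
  · rw [← sub_add_sub_cancel _ (b n x • f₀ x), ← smul_sub]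
    exact (norm_add_le _ _).trans (add_le_add_left (hle n x _) _)
  · have hsum := ((h.tendsto K hK).const_mul B).add (hbf₀.tendsto K hK)
    simp only [mul_zero, add_zero, ← integral_const_mul] at hsum
    refine hsum.congr fun n => (integral_add ?_ ?_).symm
    exacts [(h.integrableOn_norm_sub n hK).const_mul B, hbf₀.integrableOn_norm_sub n hK]

theorem comp_lipschitzWith [IsLocallyFiniteMeasure μ]
    (h : TendstoL1Loc μ f f₀) {T : F → F'} {C : NNReal} (hT : LipschitzWith C T) :
    TendstoL1Loc μ (fun n x => T (f n x)) (fun x => T (f₀ x)) :=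
  of_norm_sub_le
    (fun n => locallyIntegrable_comp_of_lipschitzWith hT (h.locallyIntegrable n))
    (locallyIntegrable_comp_of_lipschitzWith hT h.locallyIntegrable_lim)
    (fun n _ hK => (h.integrableOn_norm_sub n hK).const_mul (C : ℝ))
    (fun n x => hT.norm_sub_le _ _)
    (fun K hK => by simpa [integral_const_mul] using (h.tendsto K hK).const_mul (C : ℝ))

end

theorem mollify {E F : Type*} [NormedAddCommGroup E] [NormedSpace ℝ E] [HasContDiffBump E]
    [FiniteDimensional ℝ E] [MeasurableSpace E] [BorelSpace E] [NormedAddCommGroup F]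
    [NormedSpace ℝ F] [CompleteSpace F] {μ : Measure E} [μ.IsAddHaarMeasure] {u : E → F}
    (hu : LocallyIntegrable u μ) :
    TendstoL1Loc μ (fun n => _root_.mollify (shrinkingBump n) μ u) u := by
  refine ⟨fun n => (contDiff_mollify hu).continuous.locallyIntegrable, hu, fun K hK => ?_⟩
  obtain ⟨r, hr⟩ := hK.isBounded.subset_closedBall (0 : E)
  let v : E → F := (Metric.closedBall (0 : E) (r + 1)).indicator u
  have hv : Integrable v μ :=
    (hu.integrableOn_isCompact (isCompact_closedBall _ _)).integrable_indicator
      measurableSet_closedBall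
  have hmem : ∀ x ∈ K, ∀ y, dist y x ≤ 1 → u y = v y := fun x hx y hy =>
    (indicator_of_mem (Metric.mem_closedBall.2 <| (dist_triangle y x 0).trans <| by
      rw [add_comm]; exact add_le_add (Metric.mem_closedBall.1 (hr hx)) hy) u).symm
  have hloc : ∀ n, ∀ x ∈ K, ‖_root_.mollify (shrinkingBump n) μ u x - u x‖ =
      ‖_root_.mollify (shrinkingBump n) μ v x - v x‖ := fun n x hx => by
    rw [hmem x hx x (by simp), mollify_congr fun y hy => hmem x hx y
      ((Metric.mem_ball.1 hy).le.trans (rOut_shrinkingBump_le_one n))]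
  refine squeeze_zero (fun n => by positivity) (fun n => ?_) (tendsto_integral_norm_mollify_sub hv)
  rw [setIntegral_congr_fun hK.measurableSet (hloc n)]
  exact setIntegral_le_integral ((integrable_mollify hv).sub hv).norm
    (ae_of_all _ fun x => norm_nonneg _)

end TendstoL1Loc

section Gradient

variable {V : Type*} [NormedAddCommGroup V] [InnerProductSpace ℝ V] [CompleteSpace V] {f : V → ℝ}

theorem norm_gradient_eq_norm_fderiv (f : V → ℝ) (x : V) : ‖∇ f x‖ = ‖fderiv ℝ f x‖ :=
  LinearIsometryEquiv.norm_map _ _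

theorem continuous_gradient_of_contDiff (hf : ContDiff ℝ 1 f) : Continuous (∇ f) :=
  (LinearIsometryEquiv.continuous _).comp (hf.continuous_fderiv one_ne_zero)

theorem gradient_eq_zero_of_notMem_tsupport {x : V} (hx : x ∉ tsupport f) : ∇ f x = 0 := by
  rw [(notMem_tsupport_iff_eventuallyEq.1 hx).gradient.eq_of_nhds]
  exact gradient_fun_const x 0

end Gradient

/-- A smooth truncation at height of order `k`: it agrees with the identity to first order at `0`
and takes values in `(-k π / 2, k π / 2)`. -/
noncomputable def arctanTruncation (k r : ℝ) : ℝ := k * Real.arctan (r / k)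

section ArctanTruncation

variable {k : ℝ}

theorem abs_arctanTruncation_le (hk : 0 ≤ k) (r : ℝ) :
    |arctanTruncation k r| ≤ k * (Real.pi / 2) := by
  rw [arctanTruncation, abs_mul, abs_of_nonneg hk]
  exact mul_le_mul_of_nonneg_left (abs_le.2 ⟨(Real.neg_pi_div_two_lt_arctan _).le,
    (Real.arctan_lt_pi_div_two _).le⟩) hk

theorem contDiff_arctanTruncation : ContDiff ℝ 1 (arctanTruncation k) :=
  contDiff_const.mul (Real.contDiff_arctan.comp (contDiff_id.div_const k))

theorem deriv_arctanTruncation (hk : k ≠ 0) (r : ℝ) :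
    deriv (arctanTruncation k) r = (1 + (r / k) ^ 2)⁻¹ := by
  have h := ((((hasDerivAt_id r).div_const k).arctan).const_mul k).deriv
  simp only [id_eq] at h
  rw [← one_div]
  exact h.trans (by field_simp)

theorem deriv_arctanTruncation_nonneg (hk : k ≠ 0) (r : ℝ) : 0 ≤ deriv (arctanTruncation k) r := by
  rw [deriv_arctanTruncation hk]; positivity

theorem deriv_arctanTruncation_le_one (hk : k ≠ 0) (r : ℝ) : deriv (arctanTruncation k) r ≤ 1 := by
  rw [deriv_arctanTruncation hk]
  exact inv_le_one_of_one_le₀ (by linarith [sq_nonneg (r / k)])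

theorem tendsto_deriv_arctanTruncation_atTop (r : ℝ) :
    Tendsto (fun k => deriv (arctanTruncation k) r) atTop (𝓝 1) := by
  have h : Tendsto (fun k : ℝ => (1 + (r / k) ^ 2)⁻¹) atTop (𝓝 (1 + 0 ^ 2)⁻¹) :=
    (((tendsto_const_nhds.div_atTop tendsto_id).pow 2).const_add 1).inv₀ (by norm_num)
  rw [zero_pow two_ne_zero, add_zero, inv_one] at h
  refine h.congr' ?_
  filter_upwards [eventually_ne_atTop 0] with k hk using (deriv_arctanTruncation hk r).symm

theorem tendsto_deriv_arctanTruncation_nhdsGT_zero {r : ℝ} (hr : r ≠ 0) :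
    Tendsto (fun k => deriv (arctanTruncation k) r) (𝓝[>] 0) (𝓝 0) := by
  have h : Tendsto (fun k : ℝ => r ^ 2 * k⁻¹ ^ 2) (𝓝[>] 0) atTop :=
    ((tendsto_pow_atTop two_ne_zero).comp tendsto_inv_nhdsGT_zero).const_mul_atTop (by positivity)
  refine (tendsto_inv_atTop_zero.comp (tendsto_atTop_add_const_left _ 1 h)).congr' ?_
  filter_upwards [self_mem_nhdsWithin] with k hk
  rw [deriv_arctanTruncation (ne_of_gt hk), Function.comp_apply, div_eq_mul_inv, mul_pow]

end ArctanTruncation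

theorem hasWeakGrad_gradient {f : ℝ^l → ℝ} (hf : ContDiff ℝ 1 f) : HasWeakGrad f (∇ f) := by
  have hgrad := continuous_gradient_of_contDiff hf
  refine ⟨hf.continuous.locallyIntegrable, hgrad.locallyIntegrable, fun p hp hpc v => ?_⟩
  have hp' : Continuous fun x => fderiv ℝ p x v :=
    (hp.continuous_fderiv (by simp)).clm_apply continuous_const
  have hf' : Continuous fun x => fderiv ℝ f x v :=
    (hf.continuous_fderiv one_ne_zero).clm_apply continuous_const
  simp only [inner_gradient_left]
  refine integral_mul_fderiv_eq_neg_fderiv_mul_of_integrable ?_ ?_ ?_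
    (fun x _ => hf.differentiable one_ne_zero x) (fun x _ => hp.differentiable (by simp) x)
  · exact (hf'.mul hp.continuous).integrable_of_hasCompactSupport hpc.mul_left
  · exact (hf.continuous.mul hp').integrable_of_hasCompactSupport
      (hpc.fderiv_apply (𝕜 := ℝ) v).mul_left
  · exact (hf.continuous.mul hp.continuous).integrable_of_hasCompactSupport hpc.mul_left

namespace HasWeakGrad

variable {f : ℝ^l → ℝ} {g : ℝ^l → ℝ^l}

theorem of_tendstoL1Loc {F : ℕ → ℝ^l → ℝ} {G : ℕ → ℝ^l → ℝ^l} (h : ∀ n, HasWeakGrad (F n) (G n))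
    (hF : TendstoL1Loc volume F f) (hG : TendstoL1Loc volume G g) : HasWeakGrad f g := by
  refine ⟨hF.locallyIntegrable_lim, hG.locallyIntegrable_lim, fun p hp hpc v => ?_⟩
  have hF_lim := hF.tendsto_integral_inner
    ((hp.continuous_fderiv (by simp)).clm_apply continuous_const) (hpc.fderiv_apply (𝕜 := ℝ) v)
  have hG_lim := (hG.tendsto_integral_inner (hp.continuous.smul continuous_const)
    (q := fun x => p x • v) hpc.smul_right).neg
  have hmul : ∀ a b : ℝ, ⟪a, b⟫ = a * b := fun a b => by simp [mul_comm]
  simp only [hmul, real_inner_smul_right, mul_comm (p _), (h _).2.2 p hp hpc v] at hF_lim hG_lim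
  exact tendsto_nhds_unique hF_lim hG_lim

theorem hasGradientAt_mollify {φ : ContDiffBump (0 : ℝ^l)} (h : HasWeakGrad f g) (x : ℝ^l) :
    HasGradientAt (mollify φ volume f) (mollify φ volume g x) x := by
  let ψ : ℝ^l → ℝ := φ.normed volume
  have hψ : ContDiff ℝ (⊤ : ℕ∞) ψ := φ.contDiff_normed
  have hψc : HasCompactSupport ψ := φ.hasCompactSupport_normed
  have hψ' : ∀ y v, fderiv ℝ (fun z => ψ (x - z)) y v = -fderiv ℝ ψ (x - y) v := fun y v => by
    have := ((hψ.differentiable (by simp) (x - y)).hasFDerivAt.comp y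
      ((hasFDerivAt_id y).const_sub x)).fderiv
    exact (DFunLike.congr_fun this v).trans (by simp)
  have hswap : mollify φ volume f = f ⋆[ContinuousLinearMap.mul ℝ ℝ, volume] ψ := by
    ext y
    simp only [mollify_apply, convolution_def, ContinuousLinearMap.mul_apply', smul_eq_mul, ψ,
      mul_comm]
  rw [hasGradientAt_iff_hasFDerivAt, hswap]
  refine (hψc.hasFDerivAt_convolution_right _ h.1 (hψ.of_le (by simp)) x).congr_fderiv ?_
  ext v
  have hparts := h.2.2 (fun y => ψ (x - y)) (hψ.comp (contDiff_const.sub contDiff_id))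
    (hψc.comp_homeomorph (Homeomorph.subLeft x)) v
  simp only [hψ', mul_neg, integral_neg, neg_inj] at hparts
  rw [convolution_precompR_apply _ h.1 (hψc.fderiv ℝ) (hψ.continuous_fderiv (by simp)),
    InnerProductSpace.toDual_apply_apply, mollify_apply, ← real_inner_comm,
    ← integral_inner (integrable_normed_sub_smul h.2.1 x), convolution_def]
  simp only [ContinuousLinearMap.mul_apply', hparts, real_inner_smul_right, real_inner_comm v,
    mul_comm, ψ]

theorem comp (h : HasWeakGrad f g) {T : ℝ → ℝ} (hT : ContDiff ℝ 1 T) {C : NNReal}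
    (hC : ∀ r, ‖deriv T r‖₊ ≤ C) :
    HasWeakGrad (fun x => T (f x)) (fun x => deriv T (f x) • g x) := by
  let φ : ℕ → ContDiffBump (0 : ℝ^l) := shrinkingBump
  have hsmooth : ∀ n, ContDiff ℝ 1 (mollify (φ n) volume f) := fun n =>
    (contDiff_mollify h.1).of_le (by simp)
  have hgrad : ∀ n, ∇ (fun x => T (mollify (φ n) volume f x)) =
      fun x => deriv T (mollify (φ n) volume f x) • mollify (φ n) volume g x := fun n => by
    ext1 x
    refine HasGradientAt.gradient ?_
    rw [hasGradientAt_iff_hasFDerivAt, map_smul]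
    exact ((hT.differentiable one_ne_zero _).hasDerivAt).comp_hasFDerivAt x
      (h.hasGradientAt_mollify x)
  refine of_tendstoL1Loc (fun n => hgrad n ▸ hasWeakGrad_gradient (hT.comp (hsmooth n)))
    ((TendstoL1Loc.mollify h.1).comp_lipschitzWith
      (lipschitzWith_of_nnnorm_deriv_le (hT.differentiable one_ne_zero) hC))
    ((TendstoL1Loc.mollify h.2.1).smul (B := C)
      (fun n => (hT.continuous_deriv_one.comp (hsmooth n).continuous).aestronglyMeasurable)
      (fun n x => hC _) ?_)
  filter_upwards [ae_tendsto_mollify h.1] with x hx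
  exact (hT.continuous_deriv_one.tendsto _).comp hx

theorem ae_eq_zero (h : HasWeakGrad 0 g) : g =ᵐ[volume] 0 := by
  refine ae_eq_zero_of_integral_contDiff_smul_eq_zero h.2.1 fun p hp hpc =>
    ext_inner_left ℝ fun v => ?_
  rw [inner_zero_right, ← integral_inner
    (h.2.1.integrable_smul_left_of_hasCompactSupport hp.continuous hpc)]
  have hparts := h.2.2 p hp hpc v
  simp only [Pi.zero_apply, zero_mul, integral_zero, zero_eq_neg] at hparts
  simpa only [real_inner_smul_right, real_inner_comm v, mul_comm] using hparts

/- The truncations of `f` at height `k` tend to zero as `k → 0`, while their weak gradients tend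
to `g` on `{f = 0}` and to zero elsewhere. -/
theorem ae_eq_zero_of_eq_zero (h : HasWeakGrad f g) : ∀ᵐ x, f x = 0 → g x = 0 := by
  let k : ℕ → ℝ := fun n => 1 / ((n : ℝ) + 1)
  have hk : ∀ n, 0 < k n := fun n => Nat.one_div_pos_of_nat
  have hk_lim : Tendsto k atTop (𝓝[>] 0) :=
    tendsto_nhdsWithin_iff.2 ⟨tendsto_one_div_add_atTop_nhds_zero_nat, Eventually.of_forall hk⟩
  have hk_one : ∀ n, k n ≤ 1 := fun n =>
    (Nat.one_div_le_one_div n.zero_le).trans_eq (by simp)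
  have hderiv : ∀ n r, ‖deriv (arctanTruncation (k n)) r‖ ≤ 1 := fun n r =>
    (Real.norm_of_nonneg (deriv_arctanTruncation_nonneg (hk n).ne' r)).trans_le
      (deriv_arctanTruncation_le_one (hk n).ne' r)
  have hcomp : ∀ n, HasWeakGrad (fun x => arctanTruncation (k n) (f x))
      (fun x => deriv (arctanTruncation (k n)) (f x) • g x) := fun n =>
    h.comp (C := 1) contDiff_arctanTruncation (hderiv n)
  have hzero : TendstoL1Loc volume (fun n x => arctanTruncation (k n) (f x)) 0 := by
    have hle : ∀ n r, ‖arctanTruncation (k n) r‖ ≤ k n * (Real.pi / 2) := fun n =>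
      abs_arctanTruncation_le (hk n).le
    refine .of_dominated (locallyIntegrable_const (Real.pi / 2))
      (fun n => (hcomp n).1.aestronglyMeasurable)
      (fun n x => (hle n (f x)).trans (mul_le_of_le_one_left (by positivity) (hk_one n)))
      (ae_of_all _ fun x => squeeze_zero_norm (fun n => hle n (f x)) ?_)
    simpa using (tendsto_nhds_of_tendsto_nhdsWithin hk_lim).mul_const (Real.pi / 2)
  have hlim : TendstoL1Loc volume (fun n x => deriv (arctanTruncation (k n)) (f x) • g x)
      ((f ⁻¹' {0}).indicator g) := by
    refine .of_dominated (locallyIntegrable_norm h.2.1)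
      (fun n => (hcomp n).2.1.aestronglyMeasurable) (fun n x => ?_) (ae_of_all _ fun x => ?_)
    · rw [norm_smul]
      exact mul_le_of_le_one_left (norm_nonneg _) (hderiv n _)
    · by_cases hx : f x = 0
      · simp [hx, deriv_arctanTruncation (hk _).ne']
      · simpa [hx] using
          ((tendsto_deriv_arctanTruncation_nhdsGT_zero hx).comp hk_lim).smul_const (g x)
  filter_upwards [(of_tendstoL1Loc hcomp hzero hlim).ae_eq_zero] with x hx hfx
  rwa [indicator_of_mem (show x ∈ f ⁻¹' {0} from hfx)] at hx

theorem contDiff_mul (h : HasWeakGrad f g) {χ : ℝ^l → ℝ} (hχ : ContDiff ℝ (⊤ : ℕ∞) χ) :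
    HasWeakGrad (fun x => χ x * f x) (fun x => χ x • g x + f x • ∇ χ x) := by
  have hχ_grad : Continuous (∇ χ) := continuous_gradient_of_contDiff (hχ.of_le (by simp))
  refine ⟨h.1.continuous_smul hχ.continuous,
    (h.2.1.continuous_smul hχ.continuous).add (h.1.smul_continuous hχ_grad), fun p hp hpc v => ?_⟩
  have hχp : ∀ x, fderiv ℝ (fun y => χ y * p y) x v =
      χ x * fderiv ℝ p x v + p x * fderiv ℝ χ x v := fun x => by
    rw [fderiv_fun_mul (hχ.differentiable (by simp) x) (hp.differentiable (by simp) x)]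
    rfl
  have hparts := h.2.2 _ (hχ.mul hp) hpc.mul_left v
  simp only [hχp, mul_add] at hparts
  have hχ' : Continuous fun x => fderiv ℝ χ x v :=
    (hχ.continuous_fderiv (by simp)).clm_apply continuous_const
  have hp' : Continuous fun x => fderiv ℝ p x v :=
    (hp.continuous_fderiv (by simp)).clm_apply continuous_const
  have hleft : Integrable (fun x => f x * (χ x * fderiv ℝ p x v)) :=
    h.1.integrable_smul_right_of_hasCompactSupport (hχ.continuous.mul hp')
      (hpc.fderiv_apply (𝕜 := ℝ) v).mul_left
  have hright : Integrable (fun x => f x * (p x * fderiv ℝ χ x v)) :=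
    h.1.integrable_smul_right_of_hasCompactSupport (hp.continuous.mul hχ') hpc.mul_right
  have hgrad : Integrable (fun x => ⟪g x, v⟫ * (χ x * p x)) := by
    simpa only [real_inner_smul_right, mul_comm] using
      integrable_inner_of_hasCompactSupport h.2.1 (q := fun x => (χ x * p x) • v)
      ((hχ.continuous.mul hp.continuous).smul continuous_const) hpc.mul_left.smul_right
  rw [integral_add hleft hright, ← eq_sub_iff_add_eq] at hparts
  calc ∫ x, χ x * f x * fderiv ℝ p x v = ∫ x, f x * (χ x * fderiv ℝ p x v) := by
        simp only [mul_left_comm, mul_assoc]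
    _ = -((∫ x, ⟪g x, v⟫ * (χ x * p x)) + ∫ x, f x * (p x * fderiv ℝ χ x v)) := by
        rw [hparts]; ring
    _ = -∫ x, ⟪χ x • g x + f x • ∇ χ x, v⟫ * p x := by
        rw [← integral_add hgrad hright]
        simp only [inner_add_left, real_inner_smul_left, inner_gradient_left]
        congr 2 with x
        ring

end HasWeakGrad

section Elliptic

variable {V : Type*} [NormedAddCommGroup V] [InnerProductSpace ℝ V]

/-- A symmetric operator whose quadratic form lies between `θ ‖y‖²` and `θ⁻¹ ‖y‖²`, for a positive
`θ`. -/
structure IsElliptic (θ : ℝ) (T : V →L[ℝ] V) : Prop where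
  pos : 0 < θ
  symm : ∀ y y', ⟪T y, y'⟫ = ⟪y, T y'⟫
  le_inner : ∀ y, θ * ‖y‖ ^ 2 ≤ ⟪T y, y⟫
  inner_le : ∀ y, ⟪T y, y⟫ ≤ θ⁻¹ * ‖y‖ ^ 2

namespace IsElliptic

variable {θ : ℝ} {T : V →L[ℝ] V} (hT : IsElliptic θ T)
include hT

theorem inner_nonneg (y : V) : 0 ≤ ⟪T y, y⟫ :=
  (mul_nonneg hT.pos.le (sq_nonneg _)).trans (hT.le_inner y)

/- The form of `T` is nonnegative at `θ⁻¹ y - T y`, whence `‖T y‖² ≤ θ⁻¹ ⟪T y, y⟫`. -/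
theorem norm_apply_le (y : V) : ‖T y‖ ≤ θ⁻¹ * ‖y‖ := by
  have hθ : 0 < θ⁻¹ := inv_pos.2 hT.pos
  have hform := hT.inner_nonneg (θ⁻¹ • y - T y)
  have hTT : ⟪T (T y), y⟫ = ‖T y‖ ^ 2 := by rw [hT.symm, real_inner_self_eq_norm_sq]
  simp only [map_sub, map_smul, inner_sub_left, inner_sub_right, real_inner_smul_left,
    real_inner_smul_right, hTT, real_inner_self_eq_norm_sq] at hform
  have hsq : θ⁻¹ * ‖T y‖ ^ 2 ≤ θ⁻¹ * (θ⁻¹ * ‖y‖) ^ 2 := by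
    nlinarith [mul_le_mul_of_nonneg_left (hT.inner_le y) (sq_nonneg θ⁻¹), hT.inner_le (T y)]
  exact (sq_le_sq₀ (norm_nonneg _) (by positivity)).1 (le_of_mul_le_mul_left hsq hθ)

theorem abs_inner_apply_le (y z : V) : |⟪T y, z⟫| ≤ θ⁻¹ * (‖y‖ * ‖z‖) :=
  (abs_real_inner_le_norm _ _).trans <| by
    rw [← mul_assoc]
    exact mul_le_mul_of_nonneg_right (hT.norm_apply_le y) (norm_nonneg _)

theorem norm_le_norm_apply (y : V) : ‖y‖ ≤ θ⁻¹ * ‖T y‖ := by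
  rw [← div_eq_inv_mul, le_div_iff₀' hT.pos]
  rcases (norm_nonneg y).eq_or_lt with h0 | hpos
  · simp [← h0]
  · refine le_of_mul_le_mul_right ?_ hpos
    rw [mul_assoc, ← sq]
    exact (hT.le_inner y).trans (real_inner_le_norm _ _)

theorem two_mul_inner_apply_le (y z : V) : 2 * ⟪T y, z⟫ ≤ ⟪T y, y⟫ + ⟪T z, z⟫ := by
  have hform := hT.inner_nonneg (y - z)
  have hzy : ⟪T z, y⟫ = ⟪T y, z⟫ := by rw [hT.symm, real_inner_comm]
  simp only [map_sub, inner_sub_left, inner_sub_right, hzy] at hform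
  linarith

/- The defect `½ κ² ⟪T x, x⟫` costs at most half of the gain `κ ε ‖x‖²` because `κ = ε θ`; the
cross terms are absorbed by Young's inequality. -/
theorem le_inner_sub_of_le_neg_inner {ε B K : ℝ} (hε : 0 < ε) {x a d z : V} (hd : ‖d‖ ≤ K)
    (ha : ε * ‖x‖ ^ 2 - B ≤ -⟪a, x⟫) :
    ε * θ * (ε / 4) * ‖x‖ ^ 2 ≤
      ⟪(ε * θ) • x, ((1 : ℝ) / 2) • (d + T z) - a⟫ -
          1 / 2 * ⟪T ((ε * θ) • x), (ε * θ) • x⟫ +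
        ε * θ * (K ^ 2 / (2 * ε) + B + θ⁻¹ ^ 2 / (2 * ε) * ‖z‖ ^ 2) := by
  have hκ : 0 < ε * θ := mul_pos hε hT.pos
  have hdx : -(K * ‖x‖) ≤ ⟪x, d⟫ := (abs_le.1 ((abs_real_inner_le_norm x d).trans (by
    rw [mul_comm]; exact mul_le_mul_of_nonneg_right hd (norm_nonneg x)))).1
  have hzx : -(θ⁻¹ * (‖z‖ * ‖x‖)) ≤ ⟪x, T z⟫ := by
    rw [real_inner_comm]; exact (abs_le.1 (hT.abs_inner_apply_le z x)).1
  have hyoung : ∀ p : ℝ, p * ‖x‖ / 2 ≤ ε / 8 * ‖x‖ ^ 2 + p ^ 2 / (2 * ε) := fun p => by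
    rw [← sub_nonneg]
    have : ε / 8 * ‖x‖ ^ 2 + p ^ 2 / (2 * ε) - p * ‖x‖ / 2 = (ε * ‖x‖ - 2 * p) ^ 2 / (8 * ε) := by
      field_simp; ring
    rw [this]; positivity
  have hform : ε * θ * ⟪T x, x⟫ ≤ ε * ‖x‖ ^ 2 := by
    have := mul_le_mul_of_nonneg_left (hT.inner_le x) hκ.le
    rwa [← mul_assoc, mul_inv_cancel_right₀ hT.pos.ne'] at this
  have hbracket : ε / 4 * ‖x‖ ^ 2 ≤ 1 / 2 * (⟪x, d⟫ + ⟪x, T z⟫) - ⟪a, x⟫ -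
      1 / 2 * (ε * θ * ⟪T x, x⟫) + (K ^ 2 / (2 * ε) + B + θ⁻¹ ^ 2 / (2 * ε) * ‖z‖ ^ 2) := by
    have hyz := hyoung (θ⁻¹ * ‖z‖)
    rw [mul_pow, mul_div_right_comm (θ⁻¹ ^ 2)] at hyz
    linarith [hyoung K]
  refine (mul_assoc _ _ _).trans_le ((mul_le_mul_of_nonneg_left hbracket hκ.le).trans_eq ?_)
  simp only [map_smul, inner_sub_right, inner_add_right, real_inner_smul_left,
    real_inner_smul_right, real_inner_comm x a]
  ring

theorem le_inner_sub_of_eq_neg_smul_sub {τ : ℝ} (hτ0 : 0 ≤ τ) (hτ1 : τ ≤ 1) (b w z : V) :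
    θ / 4 * (τ * ‖b‖ ^ 2) ≤
      ⟪-(τ • b) - w, ((1 : ℝ) / 2) • T z - T b⟫ -
          1 / 2 * ⟪T (-(τ • b) - w), -(τ • b) - w⟫ +
        (θ⁻¹ / 4 * ‖z‖ ^ 2 + θ⁻¹ * (‖z‖ * ‖w‖ / 2 + ‖b‖ * ‖w‖ + ‖w‖ ^ 2 / 2)) := by
  have hexpand : ⟪-(τ • b) - w, ((1 : ℝ) / 2) • T z - T b⟫ -
      1 / 2 * ⟪T (-(τ • b) - w), -(τ • b) - w⟫ =
      (τ - τ ^ 2 / 2) * ⟪T b, b⟫ - τ / 2 * ⟪T b, z⟫ - 1 / 2 * ⟪T z, w⟫ +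
        (1 - τ) * ⟪T b, w⟫ - 1 / 2 * ⟪T w, w⟫ := by
    have hwb : ⟪T w, b⟫ = ⟪T b, w⟫ := by rw [hT.symm, real_inner_comm]
    simp only [map_sub, map_neg, map_smul, inner_sub_right, inner_sub_left, inner_neg_left,
      inner_neg_right, real_inner_smul_left, real_inner_smul_right, ← hT.symm b z,
      real_inner_comm (T b) b, real_inner_comm (T b) w, real_inner_comm (T z) w, hwb]
    ring
  have hbz : τ / 2 * ⟪T b, z⟫ ≤ τ / 4 * ⟪T b, b⟫ + θ⁻¹ / 4 * ‖z‖ ^ 2 := by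
    have hz : 0 ≤ θ⁻¹ / 4 * ‖z‖ ^ 2 := by have := hT.pos; positivity
    have hyoung := (hT.two_mul_inner_apply_le b z).trans (add_le_add_right (hT.inner_le z) _)
    linarith [mul_le_mul_of_nonneg_left hyoung (by positivity : 0 ≤ τ / 4),
      mul_le_mul_of_nonneg_right hτ1 hz]
  have hbw : -(θ⁻¹ * (‖b‖ * ‖w‖)) ≤ (1 - τ) * ⟪T b, w⟫ := by
    have h0 : 0 ≤ θ⁻¹ * (‖b‖ * ‖w‖) := (abs_nonneg _).trans (hT.abs_inner_apply_le b w)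
    linarith [mul_le_mul_of_nonneg_left (abs_le.1 (hT.abs_inner_apply_le b w)).1
      (sub_nonneg.2 hτ1), mul_nonneg hτ0 h0]
  have hzw : ⟪T z, w⟫ ≤ θ⁻¹ * (‖z‖ * ‖w‖) := (abs_le.1 (hT.abs_inner_apply_le z w)).2
  have hbb : θ / 4 * (τ * ‖b‖ ^ 2) ≤ (τ - τ ^ 2 / 2 - τ / 4) * ⟪T b, b⟫ := by
    linarith [mul_le_mul_of_nonneg_left (hT.le_inner b) (by positivity : 0 ≤ τ / 4),
      mul_nonneg (mul_nonneg hτ0 (sub_nonneg.2 hτ1)) (hT.inner_nonneg b)]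
  rw [hexpand]
  linarith [hT.inner_le w]

end IsElliptic

end Elliptic

theorem exists_eq_smul_and_norm_sq_div_eq {V : Type*} [NormedAddCommGroup V] [NormedSpace ℝ V]
    {r : ℝ} (hr : 0 ≤ r) {v : V} (h : r = 0 → v = 0) :
    ∃ z : V, v = r • z ∧ ‖v‖ ^ 2 / r = r * ‖z‖ ^ 2 := by
  rcases hr.eq_or_lt with rfl | hpos
  · exact ⟨0, by simp [h rfl], by simp⟩
  · refine ⟨r⁻¹ • v, (smul_inv_smul₀ hpos.ne' v).symm, ?_⟩
    rw [norm_smul, norm_inv, Real.norm_of_nonneg hr]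
    field_simp

theorem norm_matDiv_le {c : ℝ^l → (ℝ^l →L[ℝ] ℝ^l)} {K : ℝ} {x : ℝ^l} (h : ‖fderiv ℝ c x‖ ≤ K) :
    ‖matDiv c x‖ ≤ l * K := by
  have hterm : ∀ j ∈ (Finset.univ : Finset (Fin l)),
      ‖fderiv ℝ c x (EuclideanSpace.single j (1 : ℝ)) (EuclideanSpace.single j (1 : ℝ))‖ ≤ K :=
    fun j _ => by
      have := (fderiv ℝ c x).le_opNorm₂ (EuclideanSpace.single j (1 : ℝ))
        (EuclideanSpace.single j (1 : ℝ))
      simp only [PiLp.norm_single, norm_one, mul_one] at this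
      exact this.trans h
  simpa [matDiv] using norm_sum_le_of_le _ hterm

theorem continuous_matDiv {c : ℝ^l → (ℝ^l →L[ℝ] ℝ^l)} (h : ContDiff ℝ 1 c) :
    Continuous (matDiv c) := by
  have := h.continuous_fderiv one_ne_zero
  unfold matDiv
  fun_prop

section Rate

/-- The vector field `½ div (c m) - a m` tested against `Dh` in the variational functional. -/
noncomputable def flux (c : ℝ^l → (ℝ^l →L[ℝ] ℝ^l)) (a : ℝ^l → ℝ^l) (m : ℝ^l → ℝ) (Dm : ℝ^l → ℝ^l)
    (x : ℝ^l) : ℝ^l :=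
  ((1 : ℝ) / 2) • (m x • matDiv c x + c x (Dm x)) - m x • a x

/-- The integrand of the variational functional at the point `x`, for a test function with gradient
`y` at `x`. -/
noncomputable def rateDensity (c : ℝ^l → (ℝ^l →L[ℝ] ℝ^l)) (a : ℝ^l → ℝ^l) (m : ℝ^l → ℝ)
    (Dm : ℝ^l → ℝ^l) (x y : ℝ^l) : ℝ :=
  ⟪y, flux c a m Dm x⟫ - 1 / 2 * ⟪c x y, y⟫ * m x

/-- The variational functional at a fixed time: the supremum over compactly supported Lipschitz
functions `h` of `∫ (Dhᵀ (½ div (c m) - a m) - ½ Dhᵀ c Dh m)`. Taking positive parts does not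
change it, as `h = 0` is allowed. -/
noncomputable def rate (c : ℝ^l → (ℝ^l →L[ℝ] ℝ^l)) (a : ℝ^l → ℝ^l) (m : ℝ^l → ℝ)
    (Dm : ℝ^l → ℝ^l) : ENNReal :=
  ⨆ h : {h : ℝ^l → ℝ // (∃ K : NNReal, LipschitzWith K h) ∧ HasCompactSupport h},
    ENNReal.ofReal (∫ x, rateDensity c a m Dm x (∇ h.1 x))

/-- The Fisher information `∫ |Dm|² / m`; the integrand is zero on `{m = 0}`. -/
noncomputable def fisherInformation (m : ℝ^l → ℝ) (Dm : ℝ^l → ℝ^l) : ENNReal :=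
  ∫⁻ x, ENNReal.ofReal (‖Dm x‖ ^ 2 / m x)

/-- The coefficients `c`, `a` and the density `m` at a fixed time, with the quantitative bounds on
which the estimates depend. -/
structure IsAdmissible (θ M K : ℝ) (c : ℝ^l → (ℝ^l →L[ℝ] ℝ^l)) (a : ℝ^l → ℝ^l) (m : ℝ^l → ℝ)
    (Dm : ℝ^l → ℝ^l) : Prop where
  isElliptic : ∀ x, IsElliptic θ (c x)
  contDiff : ContDiff ℝ 1 c
  norm_matDiv_le : ∀ x, ‖matDiv c x‖ ≤ K
  measurable_drift : Measurable a
  norm_drift_le : ∀ x, ‖a x‖ ≤ M * (1 + ‖x‖)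
  nonneg : ∀ x, 0 ≤ m x
  integral_eq_one : ∫ x, m x = 1
  hasWeakGrad : HasWeakGrad m Dm

variable {c : ℝ^l → (ℝ^l →L[ℝ] ℝ^l)} {a : ℝ^l → ℝ^l} {m : ℝ^l → ℝ} {Dm : ℝ^l → ℝ^l}

theorem ofReal_integral_rateDensity_gradient_le_rate {h : ℝ^l → ℝ} {C : NNReal}
    (hh : LipschitzWith C h) (hc : HasCompactSupport h) :
    ENNReal.ofReal (∫ x, rateDensity c a m Dm x (∇ h x)) ≤ rate c a m Dm :=
  le_iSup (fun h : {h : ℝ^l → ℝ // (∃ K : NNReal, LipschitzWith K h) ∧ HasCompactSupport h} =>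
    ENNReal.ofReal (∫ x, rateDensity c a m Dm x (∇ h.1 x))) ⟨h, ⟨C, hh⟩, hc⟩

theorem continuous_rateDensity (x : ℝ^l) : Continuous (rateDensity c a m Dm x) := by
  unfold rateDensity
  fun_prop

theorem rateDensity_indicator (S : Set (ℝ^l)) (y : ℝ^l → ℝ^l) (x : ℝ^l) :
    rateDensity c a m Dm x (S.indicator y x) =
      S.indicator (fun x => rateDensity c a m Dm x (y x)) x := by
  by_cases hx : x ∈ S <;> simp [rateDensity, hx]

theorem rateDensity_of_eq_smul {x z : ℝ^l} (hz : Dm x = m x • z) (y : ℝ^l) :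
    rateDensity c a m Dm x y =
      m x * (⟪y, ((1 : ℝ) / 2) • (matDiv c x + c x z) - a x⟫ - 1 / 2 * ⟪c x y, y⟫) := by
  have hflux : flux c a m Dm x = m x • (((1 : ℝ) / 2) • (matDiv c x + c x z) - a x) := by
    rw [flux, hz, map_smul, ← smul_add, smul_comm, ← smul_sub]
  rw [rateDensity, hflux, real_inner_smul_right]
  ring

namespace IsAdmissible

variable {θ M K : ℝ} (H : IsAdmissible θ M K c a m Dm)
include H

theorem theta_pos : 0 < θ := (H.isElliptic 0).pos

theorem growth_nonneg : 0 ≤ M := by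
  simpa using (norm_nonneg _).trans (H.norm_drift_le 0)

theorem divBound_nonneg : 0 ≤ K := (norm_nonneg _).trans (H.norm_matDiv_le 0)

theorem integrable : Integrable m :=
  .of_integral_ne_zero (H.integral_eq_one.trans_ne one_ne_zero)

theorem ae_exists_grad_eq_smul :
    ∀ᵐ x, ∃ z, Dm x = m x • z ∧ ‖Dm x‖ ^ 2 / m x = m x * ‖z‖ ^ 2 :=
  H.hasWeakGrad.ae_eq_zero_of_eq_zero.mono fun x hx =>
    exists_eq_smul_and_norm_sq_div_eq (H.nonneg x) hx

theorem aestronglyMeasurable_apply {y : ℝ^l → ℝ^l} (hy : AEStronglyMeasurable y) :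
    AEStronglyMeasurable fun x => c x (y x) :=
  have hc : Continuous fun p : ℝ^l × ℝ^l => c p.1 p.2 :=
    (H.contDiff.continuous.comp continuous_fst).clm_apply continuous_snd
  hc.comp_aestronglyMeasurable (aestronglyMeasurable_id.prodMk hy)

theorem locallyIntegrable_flux : LocallyIntegrable (flux c a m Dm) := by
  have hm := H.integrable.locallyIntegrable
  have hcDm : LocallyIntegrable fun x => c x (Dm x) :=
    ((locallyIntegrable_norm H.hasWeakGrad.2.1).smul θ⁻¹).mono
      (H.aestronglyMeasurable_apply H.hasWeakGrad.2.1.aestronglyMeasurable)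
      (ae_of_all _ fun x => ((H.isElliptic x).norm_apply_le _).trans (le_abs_self _))
  have hma : LocallyIntegrable fun x => m x • a x := by
    refine (hm.smul_continuous (g := fun x => M * (1 + ‖x‖)) (by fun_prop)).mono
      (hm.aestronglyMeasurable.smul H.measurable_drift.aestronglyMeasurable)
      (ae_of_all _ fun x => ?_)
    rw [norm_smul, norm_smul]
    exact mul_le_mul_of_nonneg_left ((H.norm_drift_le x).trans (le_abs_self _)) (norm_nonneg _)
  exact (((hm.smul_continuous (continuous_matDiv H.contDiff)).add hcDm).smul ((1 : ℝ) / 2)).sub hma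

theorem aestronglyMeasurable_rateDensity {y : ℝ^l → ℝ^l} (hy : AEStronglyMeasurable y) :
    AEStronglyMeasurable fun x => rateDensity c a m Dm x (y x) :=
  (hy.inner H.locallyIntegrable_flux.aestronglyMeasurable).sub
    ((((H.aestronglyMeasurable_apply hy).inner hy).const_mul (1 / 2)).mul
      H.integrable.aestronglyMeasurable)

theorem norm_rateDensity_le {B : ℝ} {S : Set (ℝ^l)} {x y : ℝ^l} (hy : ‖y‖ ≤ B)
    (hyS : x ∉ S → y = 0) :
    ‖rateDensity c a m Dm x y‖ ≤
      S.indicator (fun x => B * ‖flux c a m Dm x‖ + θ⁻¹ / 2 * B ^ 2 * m x) x := by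
  by_cases hx : x ∈ S
  · have hquad : |⟪c x y, y⟫| ≤ θ⁻¹ * B ^ 2 := by
      refine ((H.isElliptic x).abs_inner_apply_le y y).trans ?_
      rw [← sq]
      have := H.theta_pos
      gcongr
    rw [indicator_of_mem hx]
    refine (norm_sub_le _ _).trans (add_le_add ((norm_inner_le_norm _ _).trans ?_) ?_)
    · exact mul_le_mul_of_nonneg_right hy (norm_nonneg _)
    · rw [norm_mul, norm_mul, Real.norm_of_nonneg (H.nonneg x), Real.norm_eq_abs ⟪c x y, y⟫]
      refine mul_le_mul_of_nonneg_right ?_ (H.nonneg x)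
      norm_num
      linarith
  · simp [rateDensity, hyS hx, hx]

theorem integrable_rateDensity_bound {S : Set (ℝ^l)} (hS : IsCompact S) (B : ℝ) :
    Integrable
      (S.indicator fun x => B * ‖flux c a m Dm x‖ + θ⁻¹ / 2 * B ^ 2 * m x) :=
  IntegrableOn.integrable_indicator
    (((H.locallyIntegrable_flux.integrableOn_isCompact hS).norm.const_mul B).add
      (H.integrable.integrableOn.const_mul _)) hS.measurableSet

theorem integrable_rateDensity {y : ℝ^l → ℝ^l} (hym : AEStronglyMeasurable y) {B : ℝ}
    (hyB : ∀ᵐ x, ‖y x‖ ≤ B) {S : Set (ℝ^l)} (hS : IsCompact S)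
    (hyS : ∀ᵐ x, x ∉ S → y x = 0) : Integrable fun x => rateDensity c a m Dm x (y x) := by
  refine (H.integrable_rateDensity_bound hS B).mono' (H.aestronglyMeasurable_rateDensity hym) ?_
  filter_upwards [hyB, hyS] with x hxB hxS using H.norm_rateDensity_le hxB hxS

/- The mollifications of `f` are admissible test functions with uniformly bounded gradients, so
dominated convergence applies. -/
theorem ofReal_integral_rateDensity_le_rate {f : ℝ^l → ℝ} {g : ℝ^l → ℝ^l} {B : ℝ}
    (hfg : HasWeakGrad f g) (hf : HasCompactSupport f) (hg : ∀ᵐ x, ‖g x‖ ≤ B) :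
    ENNReal.ofReal (∫ x, rateDensity c a m Dm x (g x)) ≤ rate c a m Dm := by
  obtain ⟨r, hr⟩ := hf.isCompact.isBounded.subset_closedBall 0
  let h : ℕ → ℝ^l → ℝ := fun n => mollify (shrinkingBump n) volume f
  have hgrad : ∀ n, ∇ (h n) = mollify (shrinkingBump n) volume g := fun n =>
    funext fun x => (hfg.hasGradientAt_mollify x).gradient
  have hgradB : ∀ n x, ‖∇ (h n) x‖ ≤ B := fun n x => by
    rw [hgrad]; exact norm_mollify_le hg x
  have htsupport : ∀ n, tsupport (h n) ⊆ Metric.closedBall 0 (r + 1) := fun n =>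
    (tsupport_mollify_subset hr).trans
      (Metric.closedBall_subset_closedBall (add_le_add_right (rOut_shrinkingBump_le_one n) r))
  have hle : ∀ n, ENNReal.ofReal (∫ x, rateDensity c a m Dm x (∇ (h n) x)) ≤ rate c a m Dm :=
    fun n => ofReal_integral_rateDensity_gradient_le_rate
      (lipschitzWith_of_nnnorm_fderiv_le (C := B.toNNReal)
        ((contDiff_mollify hfg.1).differentiable (by simp)) fun x => by
          rw [← NNReal.coe_le_coe, coe_nnnorm, ← norm_gradient_eq_norm_fderiv]
          exact (hgradB n x).trans (Real.le_coe_toNNReal B))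
      ((isCompact_closedBall 0 (r + 1)).of_isClosed_subset (isClosed_tsupport _) (htsupport n))
  refine le_of_tendsto' ((ENNReal.continuous_ofReal.tendsto _).comp
    (tendsto_integral_of_dominated_convergence _ (fun n => ?_)
      (H.integrable_rateDensity_bound (isCompact_closedBall 0 (r + 1)) B) (fun n => ?_) ?_)) hle
  · exact H.aestronglyMeasurable_rateDensity (continuous_gradient_of_contDiff
      ((contDiff_mollify hfg.1).of_le (by simp))).aestronglyMeasurable
  · exact ae_of_all _ fun x => H.norm_rateDensity_le (hgradB n x)
      fun hx => gradient_eq_zero_of_notMem_tsupport fun hx' => hx (htsupport n hx')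
  · filter_upwards [ae_tendsto_mollify hfg.2.1] with x hx
    simp only [hgrad]
    exact ((continuous_rateDensity x).tendsto _).comp hx

theorem aestronglyMeasurable_norm_sq_div : AEStronglyMeasurable fun x => ‖Dm x‖ ^ 2 / m x :=
  (H.hasWeakGrad.2.1.aestronglyMeasurable.norm.pow 2).div₀ H.integrable.aestronglyMeasurable

theorem lintegral_ofReal_mul_add_mul_le {r q : ℝ} (hr : 0 ≤ r) (hq : 0 ≤ q) (u : ℝ^l → ℝ) :
    ∫⁻ x, ENNReal.ofReal (r * m x + q * u x) ≤
      ENNReal.ofReal r + ENNReal.ofReal q * ∫⁻ x, ENNReal.ofReal (u x) := by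
  have hm : ∫⁻ x, ENNReal.ofReal (r * m x) = ENNReal.ofReal r := by
    rw [← ofReal_integral_eq_lintegral_ofReal (H.integrable.const_mul r)
      (ae_of_all _ fun x => mul_nonneg hr (H.nonneg x)), integral_const_mul, H.integral_eq_one,
      mul_one]
  rw [← hm, ← lintegral_const_mul' _ _ ENNReal.ofReal_ne_top,
    ← lintegral_add_left' (H.integrable.const_mul r).aemeasurable.ennreal_ofReal]
  exact lintegral_mono fun x => ENNReal.ofReal_add_le.trans_eq (by rw [ENNReal.ofReal_mul hq])

theorem lintegral_drift_sq_le {v : ℝ^l → ℝ} {A D α β : ℝ} (hA : 0 ≤ A) (hD : 0 ≤ D) (hα : 0 ≤ α)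
    (hβ : 0 ≤ β) (hav : ∀ᵐ x, ‖a x‖ ^ 2 * m x ≤ A * v x + D * m x)
    (hv : ∫⁻ x, ENNReal.ofReal (v x) ≤
      rate c a m Dm + ∫⁻ x, ENNReal.ofReal (α * m x + β * (‖Dm x‖ ^ 2 / m x))) :
    ∫⁻ x, ENNReal.ofReal (‖a x‖ ^ 2 * m x) ≤
      ENNReal.ofReal (A * (1 + α + β) + D) * (rate c a m Dm + fisherInformation m Dm + 1) := by
  set Q := rate c a m Dm + fisherInformation m Dm + 1
  have hrate : rate c a m Dm ≤ Q := le_self_add.trans le_self_add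
  have hfisher : fisherInformation m Dm ≤ Q := le_add_self.trans le_self_add
  have hone : 1 ≤ Q := le_add_self
  calc ∫⁻ x, ENNReal.ofReal (‖a x‖ ^ 2 * m x)
      ≤ ∫⁻ x, ENNReal.ofReal (D * m x + A * v x) :=
        lintegral_mono_ae (hav.mono fun x hx => ENNReal.ofReal_le_ofReal (by linarith))
    _ ≤ ENNReal.ofReal D + ENNReal.ofReal A * (rate c a m Dm + (ENNReal.ofReal α +
          ENNReal.ofReal β * fisherInformation m Dm)) :=
        (H.lintegral_ofReal_mul_add_mul_le hD hA _).trans <| by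
          gcongr
          exact hv.trans (add_le_add_right (H.lintegral_ofReal_mul_add_mul_le hα hβ _) _)
    _ ≤ ENNReal.ofReal D * Q + ENNReal.ofReal A * (Q + (ENNReal.ofReal α * Q +
          ENNReal.ofReal β * Q)) := by
        gcongr <;> exact le_mul_of_one_le_right' hone
    _ = _ := by
        rw [ENNReal.ofReal_add (by positivity) hD, ENNReal.ofReal_mul hA,
          ENNReal.ofReal_add (by positivity) hβ, ENNReal.ofReal_add zero_le_one hα,
          ENNReal.ofReal_one]
        ring

end IsAdmissible

end Rate

section DissipativeDrift

/-- The quadratic `κ / 2 * (‖x‖ ^ 2 - k ^ 2)`, cut off at `0` outside the ball of radius `k`. -/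
noncomputable def truncatedQuadratic {V : Type*} [NormedAddCommGroup V] (κ k : ℝ) (x : V) : ℝ :=
  κ / 2 * (min ‖x‖ k ^ 2 - k ^ 2)

section TruncatedQuadratic

variable {V : Type*} [NormedAddCommGroup V] {κ k : ℝ}

theorem exists_lipschitzWith_truncatedQuadratic (hκ : 0 ≤ κ) (hk : 0 ≤ k) :
    ∃ C : NNReal, LipschitzWith C (truncatedQuadratic κ k : V → ℝ) := by
  refine ⟨⟨κ * k, by positivity⟩, LipschitzWith.of_dist_le_mul fun x y => ?_⟩
  have hmin : |min ‖x‖ k - min ‖y‖ k| ≤ dist x y := by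
    simpa [Real.dist_eq] using ((lipschitzWith_one_norm (E := V)).min_const k).dist_le_mul x y
  have hnonneg : ∀ z : V, 0 ≤ min ‖z‖ k := fun z => le_min (norm_nonneg z) hk
  have hsum : κ / 2 * (min ‖x‖ k + min ‖y‖ k) ≤ κ * k := by
    linarith [mul_le_mul_of_nonneg_left (min_le_right ‖x‖ k) hκ,
      mul_le_mul_of_nonneg_left (min_le_right ‖y‖ k) hκ]
  have hfactor : truncatedQuadratic κ k x - truncatedQuadratic κ k y =
      κ / 2 * (min ‖x‖ k + min ‖y‖ k) * (min ‖x‖ k - min ‖y‖ k) := by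
    unfold truncatedQuadratic; ring
  rw [Real.dist_eq, hfactor, abs_mul,
    abs_of_nonneg (mul_nonneg (by positivity) (add_nonneg (hnonneg x) (hnonneg y)))]
  exact mul_le_mul hsum hmin (abs_nonneg _) (mul_nonneg hκ hk)

theorem truncatedQuadratic_eq_zero {x : V} (h : k ≤ ‖x‖) : truncatedQuadratic κ k x = 0 := by
  rw [truncatedQuadratic, min_eq_right h, sub_self, mul_zero]

theorem hasCompactSupport_truncatedQuadratic [ProperSpace V] :
    HasCompactSupport (truncatedQuadratic κ k : V → ℝ) :=
  HasCompactSupport.intro (isCompact_closedBall 0 k) fun x hx => by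
    rw [mem_closedBall_zero_iff, not_le] at hx
    exact truncatedQuadratic_eq_zero hx.le

theorem ae_gradient_truncatedQuadratic_eq [InnerProductSpace ℝ V] [FiniteDimensional ℝ V]
    [MeasurableSpace V] [BorelSpace V] {μ : Measure V} [μ.IsAddHaarMeasure] (hk : k ≠ 0) :
    ∇ (truncatedQuadratic κ k) =ᵐ[μ] (Metric.ball (0 : V) k).indicator fun x => κ • x := by
  filter_upwards [measure_eq_zero_iff_ae_notMem.1 (Measure.addHaar_sphere_of_ne_zero μ 0 hk)]
    with x hx
  rcases lt_or_gt_of_ne (mem_sphere_zero_iff_norm.not.1 hx) with h | h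
  · have hquad : HasGradientAt (fun y : V => κ / 2 * (‖y‖ ^ 2 - k ^ 2)) (κ • x) x := by
      rw [hasGradientAt_iff_hasFDerivAt]
      refine (((hasStrictFDerivAt_norm_sq x).hasFDerivAt.sub_const (k ^ 2)).const_mul
        (κ / 2)).congr_fderiv ?_
      ext y
      simp only [smul_apply, innerSL_apply_apply, smul_eq_mul, map_smul,
        nsmul_eq_mul, InnerProductSpace.toDual_apply_apply, Nat.cast_ofNat]
      ring
    rw [indicator_of_mem (mem_ball_zero_iff.2 h)]
    refine (hquad.congr_of_eventuallyEq ?_).gradient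
    filter_upwards [continuous_norm.continuousAt.eventually_lt continuousAt_const h] with y hy
    rw [truncatedQuadratic, min_eq_left hy.le]
  · have hzero : truncatedQuadratic κ k =ᶠ[𝓝 x] fun _ => (0 : ℝ) := by
      filter_upwards [continuousAt_const.eventually_lt continuous_norm.continuousAt h] with y hy
      exact truncatedQuadratic_eq_zero hy.le
    rw [hzero.gradient.eq_of_nhds, gradient_fun_const,
      indicator_of_notMem (mem_ball_zero_iff.not.2 h.not_gt)]

end TruncatedQuadratic

/-- The drift `a` points inwards at least linearly, outside the ball of radius `R`. -/
def IsDissipative {V : Type*} [NormedAddCommGroup V] [InnerProductSpace ℝ V] (ε R : ℝ)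
    (a : V → V) : Prop :=
  ∀ x, R ≤ ‖x‖ → ⟪a x, x⟫ ≤ -ε * ‖x‖ ^ 2

theorem IsDissipative.le_neg_inner {V : Type*} [NormedAddCommGroup V] [InnerProductSpace ℝ V]
    {a : V → V} {ε R M : ℝ} (h : IsDissipative ε R a) (hε : 0 ≤ ε)
    (ha : ∀ x, ‖a x‖ ≤ M * (1 + ‖x‖)) (x : V) :
    ε * ‖x‖ ^ 2 - (ε * R ^ 2 + M * (1 + |R|) * |R|) ≤ -⟪a x, x⟫ := by
  have hM : 0 ≤ M := by simpa using (norm_nonneg _).trans (ha 0)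
  rcases le_total R ‖x‖ with hR | hR
  · linarith [h x hR, (by positivity : 0 ≤ ε * R ^ 2 + M * (1 + |R|) * |R|)]
  · have hR' : ‖x‖ ≤ |R| := hR.trans (le_abs_self R)
    have hinner : ⟪a x, x⟫ ≤ M * (1 + |R|) * |R| := by
      refine (real_inner_le_norm _ _).trans (mul_le_mul ((ha x).trans ?_) hR' (norm_nonneg _) ?_)
      · gcongr
      · positivity
    have hsq : ε * ‖x‖ ^ 2 ≤ ε * R ^ 2 := by gcongr
    linarith

variable {c : ℝ^l → (ℝ^l →L[ℝ] ℝ^l)} {a : ℝ^l → ℝ^l} {m : ℝ^l → ℝ} {Dm : ℝ^l → ℝ^l}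

theorem ofReal_setIntegral_ball_rateDensity_smul_le_rate {κ k : ℝ} (hκ : 0 ≤ κ) (hk : 0 < k) :
    ENNReal.ofReal (∫ x in Metric.ball 0 k, rateDensity c a m Dm x (κ • x)) ≤ rate c a m Dm := by
  obtain ⟨C, hC⟩ := exists_lipschitzWith_truncatedQuadratic (V := ℝ^l) hκ hk.le
  have hgrad : (fun x => rateDensity c a m Dm x (∇ (truncatedQuadratic κ k) x)) =ᵐ[volume]
      (Metric.ball 0 k).indicator fun x => rateDensity c a m Dm x (κ • x) := by
    filter_upwards [ae_gradient_truncatedQuadratic_eq hk.ne'] with x hx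
    rw [hx, rateDensity_indicator]
  rw [← integral_indicator measurableSet_ball, ← integral_congr_ae hgrad]
  exact ofReal_integral_rateDensity_gradient_le_rate hC hasCompactSupport_truncatedQuadratic

namespace IsAdmissible

variable {θ M K : ℝ} (H : IsAdmissible θ M K c a m Dm)
include H

theorem integrableOn_rateDensity_smul (κ k : ℝ) :
    IntegrableOn (fun x => rateDensity c a m Dm x (κ • x)) (Metric.ball 0 k) := by
  rw [← integrable_indicator_iff measurableSet_ball]
  refine (H.integrable_rateDensity (y := (Metric.ball 0 k).indicator fun x => κ • x)
    (B := |κ| * |k|) (S := Metric.closedBall 0 k)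
    ((aestronglyMeasurable_id.const_smul κ).indicator measurableSet_ball)
    (ae_of_all _ fun x => ?_) (isCompact_closedBall 0 k) (ae_of_all _ fun x hx => ?_)).congr
    (ae_of_all _ (rateDensity_indicator _ _))
  · by_cases hx : x ∈ Metric.ball 0 k
    · rw [indicator_of_mem hx, norm_smul, Real.norm_eq_abs]
      gcongr
      exact (mem_ball_zero_iff.1 hx).le.trans (le_abs_self k)
    · rw [indicator_of_notMem hx, norm_zero]
      positivity
  · exact indicator_of_notMem (fun h => hx (Metric.ball_subset_closedBall h)) _

/- The test functions are quadratics truncated at height zero, on balls exhausting the space. -/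
theorem lintegral_norm_sq_le_of_isDissipative {ε R : ℝ} (hε : 0 < ε) (ha : IsDissipative ε R a) :
    ∫⁻ x, ENNReal.ofReal (ε * θ * (ε / 4) * ‖x‖ ^ 2 * m x) ≤
      rate c a m Dm + ∫⁻ x, ENNReal.ofReal
        (ε * θ * (K ^ 2 / (2 * ε) + (ε * R ^ 2 + M * (1 + |R|) * |R|)) * m x +
          ε * θ * (θ⁻¹ ^ 2 / (2 * ε)) * (‖Dm x‖ ^ 2 / m x)) := by
  have hκ : 0 ≤ ε * θ := mul_nonneg hε.le H.theta_pos.le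
  have hM := H.growth_nonneg
  have hpointwise : ∀ᵐ x, ε * θ * (ε / 4) * ‖x‖ ^ 2 * m x ≤
      rateDensity c a m Dm x ((ε * θ) • x) +
        (ε * θ * (K ^ 2 / (2 * ε) + (ε * R ^ 2 + M * (1 + |R|) * |R|)) * m x +
          ε * θ * (θ⁻¹ ^ 2 / (2 * ε)) * (‖Dm x‖ ^ 2 / m x)) := by
    filter_upwards [H.ae_exists_grad_eq_smul] with x ⟨z, hz, hz_sq⟩
    rw [rateDensity_of_eq_smul hz, hz_sq]
    linarith [mul_le_mul_of_nonneg_left ((H.isElliptic x).le_inner_sub_of_le_neg_inner (z := z) hε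
      (H.norm_matDiv_le x) (ha.le_neg_inner hε.le H.norm_drift_le x)) (H.nonneg x)]
  rw [← setLIntegral_univ, ← Metric.iUnion_ball_nat_succ 0,
    setLIntegral_iUnion_of_directed _ (monotone_nat_of_le_succ fun n =>
      Metric.ball_subset_ball (by push_cast; linarith)).directed_le]
  refine iSup_le fun n => (lintegral_ofReal_le_ofReal_integral_add (ae_of_all _ fun x => ?_)
    (H.integrableOn_rateDensity_smul (ε * θ) (n + 1)) ?_ (ae_of_all _ fun x => ?_)
    (ae_restrict_of_ae hpointwise)).trans (add_le_add
      (ofReal_setIntegral_ball_rateDensity_smul_le_rate hκ n.cast_add_one_pos)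
      (setLIntegral_le_lintegral _ _))
  · have := H.nonneg x
    positivity
  · exact ((H.integrable.aestronglyMeasurable.const_mul _).add
      (H.aestronglyMeasurable_norm_sq_div.const_mul _)).restrict
  · have := H.nonneg x
    change 0 ≤ _
    positivity

theorem norm_drift_sq_le (x : ℝ^l) : ‖a x‖ ^ 2 ≤ 2 * M ^ 2 * (‖x‖ ^ 2 + 1) :=
  calc ‖a x‖ ^ 2 ≤ (M * (1 + ‖x‖)) ^ 2 := by gcongr; exact H.norm_drift_le x
    _ ≤ 2 * M ^ 2 * (‖x‖ ^ 2 + 1) := by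
      linarith [mul_nonneg (sq_nonneg M) (sq_nonneg (‖x‖ - 1))]

end IsAdmissible

theorem exists_lintegral_drift_sq_le_of_isDissipative (θ M K : ℝ) {ε : ℝ} (hε : 0 < ε) (R : ℝ) :
    ∃ C : ℝ, ∀ {c : ℝ^l → (ℝ^l →L[ℝ] ℝ^l)} {a : ℝ^l → ℝ^l} {m : ℝ^l → ℝ} {Dm : ℝ^l → ℝ^l},
      IsAdmissible θ M K c a m Dm → IsDissipative ε R a →
        ∫⁻ x, ENNReal.ofReal (‖a x‖ ^ 2 * m x) ≤
          ENNReal.ofReal C * (rate c a m Dm + fisherInformation m Dm + 1) := by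
  refine ⟨_, fun {c a m Dm} H ha => H.lintegral_drift_sq_le
    (A := 2 * M ^ 2 / (ε * θ * (ε / 4))) (D := 2 * M ^ 2) ?_ ?_ ?_ ?_ (ae_of_all _ fun x => ?_)
    (H.lintegral_norm_sq_le_of_isDissipative hε ha)⟩
  · have := H.theta_pos
    positivity
  · positivity
  · have := H.theta_pos
    have := H.growth_nonneg
    positivity
  · have := H.theta_pos
    positivity
  · have := H.theta_pos
    calc ‖a x‖ ^ 2 * m x ≤ 2 * M ^ 2 * (‖x‖ ^ 2 + 1) * m x :=
          mul_le_mul_of_nonneg_right (H.norm_drift_sq_le x) (H.nonneg x)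
      _ = _ := by field_simp

end DissipativeDrift

section DilatedBump

variable {V : Type*} [NormedAddCommGroup V]

/-- A smooth cutoff function, equal to one on the ball of radius `r` and vanishing outside the ball
of radius `2 r`. The cutoffs are dilations of a single bump, so that their gradients are
`O(1 / r)`. -/
noncomputable def dilatedBump [NormedSpace ℝ V] [HasContDiffBump V] (r : ℝ) (x : V) : ℝ :=
  (⟨1, 2, one_pos, one_lt_two⟩ : ContDiffBump (0 : V)) (r⁻¹ • x)

section NormedSpace

variable [NormedSpace ℝ V] [HasContDiffBump V]

theorem dilatedBump_nonneg (r : ℝ) (x : V) : 0 ≤ dilatedBump r x := ContDiffBump.nonneg _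

theorem dilatedBump_le_one (r : ℝ) (x : V) : dilatedBump r x ≤ 1 := ContDiffBump.le_one _

theorem contDiff_dilatedBump (r : ℝ) : ContDiff ℝ (⊤ : ℕ∞) (dilatedBump r : V → ℝ) :=
  (ContDiffBump.contDiff _).comp (contDiff_const_smul _)

theorem dilatedBump_eq_one {r : ℝ} (hr : 0 < r) {x : V} (hx : ‖x‖ ≤ r) : dilatedBump r x = 1 := by
  refine ContDiffBump.one_of_mem_closedBall _ ?_
  rw [mem_closedBall_zero_iff, norm_smul, Real.norm_of_nonneg (inv_nonneg.2 hr.le)]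
  exact (inv_mul_le_one₀ hr).2 hx

theorem dilatedBump_eq_zero {r : ℝ} (hr : 0 < r) {x : V} (hx : 2 * r ≤ ‖x‖) :
    dilatedBump r x = 0 := by
  refine ContDiffBump.zero_of_le_dist _ ?_
  rw [dist_zero_right, norm_smul, Real.norm_of_nonneg (inv_nonneg.2 hr.le), ← div_eq_inv_mul]
  exact (le_div_iff₀ hr).2 hx

theorem hasCompactSupport_dilatedBump [ProperSpace V] {r : ℝ} (hr : 0 < r) :
    HasCompactSupport (dilatedBump r : V → ℝ) :=
  HasCompactSupport.intro (isCompact_closedBall 0 (2 * r)) fun x hx => by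
    rw [mem_closedBall_zero_iff, not_le] at hx
    exact dilatedBump_eq_zero hr hx.le

end NormedSpace

variable [InnerProductSpace ℝ V] [CompleteSpace V]

theorem gradient_dilatedBump_eq_zero_of_norm_lt {r : ℝ} (hr : 0 < r) {x : V} (hx : ‖x‖ < r) :
    ∇ (dilatedBump r) x = 0 := by
  have h : dilatedBump r =ᶠ[𝓝 x] fun _ => (1 : ℝ) := by
    filter_upwards [continuous_norm.continuousAt.eventually_lt continuousAt_const hx] with y hy
      using dilatedBump_eq_one hr hy.le
  rw [h.gradient.eq_of_nhds, gradient_fun_const]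

theorem gradient_dilatedBump_eq_zero_of_lt_norm {r : ℝ} (hr : 0 < r) {x : V} (hx : 2 * r < ‖x‖) :
    ∇ (dilatedBump r) x = 0 := by
  have h : dilatedBump r =ᶠ[𝓝 x] fun _ => (0 : ℝ) := by
    filter_upwards [continuousAt_const.eventually_lt continuous_norm.continuousAt hx] with y hy
      using dilatedBump_eq_zero hr hy.le
  rw [h.gradient.eq_of_nhds, gradient_fun_const]

theorem exists_norm_gradient_dilatedBump_mul_le (V : Type*) [NormedAddCommGroup V]
    [InnerProductSpace ℝ V] [FiniteDimensional ℝ V] :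
    ∃ C, ∀ r : ℝ, 1 ≤ r → ∀ x : V, ‖∇ (dilatedBump r) x‖ * (1 + ‖x‖) ≤ C := by
  let ψ : ContDiffBump (0 : V) := ⟨1, 2, one_pos, one_lt_two⟩
  obtain ⟨C, hC⟩ := (ψ.hasCompactSupport.fderiv (𝕜 := ℝ)).exists_bound_of_continuous
    ((ψ.contDiff (n := 1)).continuous_fderiv one_ne_zero)
  have hC0 : 0 ≤ C := (norm_nonneg _).trans (hC 0)
  refine ⟨3 * C, fun r hr x => ?_⟩
  have hr0 : 0 < r := one_pos.trans_le hr
  rcases lt_or_ge (2 * r) ‖x‖ with hx | hx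
  · rw [gradient_dilatedBump_eq_zero_of_lt_norm hr0 hx, norm_zero, zero_mul]
    positivity
  · have hgrad : ‖∇ (dilatedBump r) x‖ ≤ r⁻¹ * C := by
      change ‖∇ (fun y => ψ (r⁻¹ • y)) x‖ ≤ r⁻¹ * C
      rw [norm_gradient_eq_norm_fderiv, fderiv_comp_smul, norm_smul,
        Real.norm_of_nonneg (inv_nonneg.2 hr0.le)]
      exact mul_le_mul_of_nonneg_left (hC _) (inv_nonneg.2 hr0.le)
    calc ‖∇ (dilatedBump r) x‖ * (1 + ‖x‖) ≤ r⁻¹ * C * (3 * r) :=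
          mul_le_mul hgrad (by linarith) (by positivity) (by positivity)
      _ = 3 * C := by field_simp

end DilatedBump

section GradientDrift

/-- The pair `f`, `b` consists of a function and its weak gradient, with `c b = a - ½ div c`. -/
def IsDriftPotential (c : ℝ^l → (ℝ^l →L[ℝ] ℝ^l)) (a : ℝ^l → ℝ^l) (f : ℝ^l → ℝ) (b : ℝ^l → ℝ^l) :
    Prop :=
  HasWeakGrad f b ∧ ∀ᵐ x, c x (b x) = a x - ((1 : ℝ) / 2) • matDiv c x

/-- The gradient of the test function `-χ T(f)`, for a function `f` with weak gradient `b`, where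
`χ` is the cutoff at radius `r` and `T` is the truncation at height `k`. -/
noncomputable def testGradient (k r : ℝ) (f : ℝ^l → ℝ) (b : ℝ^l → ℝ^l) (x : ℝ^l) : ℝ^l :=
  -((dilatedBump r x * deriv (arctanTruncation k) (f x)) • b x) -
    arctanTruncation k (f x) • ∇ (dilatedBump r) x

theorem testGradient_eq_zero (k : ℝ) {r : ℝ} (hr : 0 < r) (f : ℝ^l → ℝ) (b : ℝ^l → ℝ^l) {x : ℝ^l}
    (hx : x ∉ Metric.closedBall 0 (2 * r)) : testGradient k r f b x = 0 := by
  rw [mem_closedBall_zero_iff, not_le] at hx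
  rw [testGradient, dilatedBump_eq_zero hr hx.le, gradient_dilatedBump_eq_zero_of_lt_norm hr hx,
    zero_mul, zero_smul, neg_zero, smul_zero, sub_zero]

theorem dilatedBump_mul_deriv_arctanTruncation_mem_Icc {k : ℝ} (hk : k ≠ 0) (r : ℝ) (x : ℝ^l)
    (s : ℝ) : dilatedBump r x * deriv (arctanTruncation k) s ∈ Icc (0 : ℝ) 1 :=
  ⟨mul_nonneg (dilatedBump_nonneg r x) (deriv_arctanTruncation_nonneg hk s),
    mul_le_one₀ (dilatedBump_le_one r x) (deriv_arctanTruncation_nonneg hk s)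
      (deriv_arctanTruncation_le_one hk s)⟩

theorem norm_arctanTruncation_smul_mul_le {k : ℝ} (hk : 0 ≤ k) {y : ℝ^l} {q C : ℝ}
    (hq : 1 ≤ q) (hy : ‖y‖ * q ≤ C) (s : ℝ) :
    ‖arctanTruncation k s • y‖ * q ≤ k * (Real.pi / 2) * C := by
  rw [norm_smul, Real.norm_eq_abs, mul_assoc]
  exact mul_le_mul (abs_arctanTruncation_le hk s) hy (by positivity) (by positivity)

theorem HasWeakGrad.neg {f : ℝ^l → ℝ} {g : ℝ^l → ℝ^l} (h : HasWeakGrad f g) :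
    HasWeakGrad (fun x => -f x) fun x => -g x := by
  simpa [deriv_neg] using h.comp (T := Neg.neg) (C := 1) contDiff_neg (by simp)

theorem hasWeakGrad_testGradient {k : ℝ} (hk : k ≠ 0) (r : ℝ) {f : ℝ^l → ℝ} {b : ℝ^l → ℝ^l}
    (h : HasWeakGrad f b) :
    HasWeakGrad (fun x => -(dilatedBump r x * arctanTruncation k (f x)))
      (testGradient k r f b) := by
  have hderiv : ∀ s, ‖deriv (arctanTruncation k) s‖₊ ≤ 1 := fun s => by
    rw [← NNReal.coe_le_coe, coe_nnnorm, NNReal.coe_one,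
      Real.norm_of_nonneg (deriv_arctanTruncation_nonneg hk s)]
    exact deriv_arctanTruncation_le_one hk s
  have heq : testGradient k r f b = fun x => -(dilatedBump r x •
      deriv (arctanTruncation k) (f x) • b x + arctanTruncation k (f x) • ∇ (dilatedBump r) x) := by
    ext1 x
    rw [testGradient, smul_smul, neg_add']
  rw [heq]
  exact ((h.comp contDiff_arctanTruncation hderiv).contDiff_mul (contDiff_dilatedBump r)).neg

theorem IsDriftPotential.aestronglyMeasurable_deriv_arctanTruncation
    {c : ℝ^l → (ℝ^l →L[ℝ] ℝ^l)} {a : ℝ^l → ℝ^l} {f : ℝ^l → ℝ} {b : ℝ^l → ℝ^l}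
    (h : IsDriftPotential c a f b) (k : ℝ) :
    AEStronglyMeasurable fun x => deriv (arctanTruncation k) (f x) :=
  (contDiff_arctanTruncation.continuous_deriv le_rfl).comp_aestronglyMeasurable
    h.1.1.aestronglyMeasurable

variable {c : ℝ^l → (ℝ^l →L[ℝ] ℝ^l)} {a : ℝ^l → ℝ^l} {m : ℝ^l → ℝ} {Dm : ℝ^l → ℝ^l}

namespace IsAdmissible

variable {θ M K : ℝ} (H : IsAdmissible θ M K c a m Dm)
include H

theorem norm_le_of_apply_eq {x b : ℝ^l} (hb : c x b = a x - ((1 : ℝ) / 2) • matDiv c x) :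
    ‖b‖ ≤ θ⁻¹ * (M + K / 2) * (1 + ‖x‖) := by
  have hcb : ‖c x b‖ ≤ M * (1 + ‖x‖) + K / 2 := by
    rw [hb]
    refine (norm_sub_le _ _).trans (add_le_add (H.norm_drift_le x) ?_)
    rw [norm_smul, Real.norm_of_nonneg (by norm_num)]
    linarith [H.norm_matDiv_le x]
  calc ‖b‖ ≤ θ⁻¹ * ‖c x b‖ := (H.isElliptic x).norm_le_norm_apply b
    _ ≤ θ⁻¹ * ((M + K / 2) * (1 + ‖x‖)) :=
      mul_le_mul_of_nonneg_left
        (by linarith [mul_nonneg H.divBound_nonneg (norm_nonneg x)])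
        (inv_nonneg.2 H.theta_pos.le)
    _ = _ := (mul_assoc _ _ _).symm

theorem potentialBound_nonneg : 0 ≤ θ⁻¹ * (M + K / 2) :=
  mul_nonneg (inv_nonneg.2 H.theta_pos.le)
    (add_nonneg H.growth_nonneg (div_nonneg H.divBound_nonneg zero_le_two))

theorem norm_drift_sq_le_of_apply_eq {x b : ℝ^l}
    (hb : c x b = a x - ((1 : ℝ) / 2) • matDiv c x) :
    ‖a x‖ ^ 2 ≤ 2 * θ⁻¹ ^ 2 * ‖b‖ ^ 2 + K ^ 2 / 2 := by
  have ha : ‖a x‖ ≤ θ⁻¹ * ‖b‖ + K / 2 := by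
    rw [← sub_add_cancel (a x) (((1 : ℝ) / 2) • matDiv c x), ← hb]
    refine (norm_add_le _ _).trans (add_le_add ((H.isElliptic x).norm_apply_le b) ?_)
    rw [norm_smul, Real.norm_of_nonneg (by norm_num)]
    linarith [H.norm_matDiv_le x]
  calc ‖a x‖ ^ 2 ≤ (θ⁻¹ * ‖b‖ + K / 2) ^ 2 := by gcongr
    _ ≤ 2 * θ⁻¹ ^ 2 * ‖b‖ ^ 2 + K ^ 2 / 2 := by linarith [sq_nonneg (θ⁻¹ * ‖b‖ - K / 2)]

theorem le_rateDensity_of_apply_eq {x b w z : ℝ^l}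
    (hb : c x b = a x - ((1 : ℝ) / 2) • matDiv c x) (hz : Dm x = m x • z) {τ : ℝ} (hτ0 : 0 ≤ τ)
    (hτ1 : τ ≤ 1) :
    θ / 4 * (τ * ‖b‖ ^ 2) * m x ≤ rateDensity c a m Dm x (-(τ • b) - w) +
      m x * (θ⁻¹ / 4 * ‖z‖ ^ 2 + θ⁻¹ * (‖z‖ * ‖w‖ / 2 + ‖b‖ * ‖w‖ + ‖w‖ ^ 2 / 2)) := by
  have ha : ((1 : ℝ) / 2) • (matDiv c x + c x z) - a x = ((1 : ℝ) / 2) • c x z - c x b := by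
    rw [hb, smul_add]; abel
  rw [rateDensity_of_eq_smul hz, ha, mul_comm, ← mul_add]
  exact mul_le_mul_of_nonneg_left
    ((H.isElliptic x).le_inner_sub_of_eq_neg_smul_sub hτ0 hτ1 b w z) (H.nonneg x)

variable {f : ℝ^l → ℝ} {b : ℝ^l → ℝ^l}

theorem exists_ae_norm_testGradient_le (hfb : IsDriftPotential c a f b) {k r : ℝ} (hk : 0 < k)
    (hr : 1 ≤ r) : ∃ B, ∀ᵐ x, ‖testGradient k r f b x‖ ≤ B := by
  obtain ⟨C, hC⟩ := exists_norm_gradient_dilatedBump_mul_le (ℝ^l)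
  have hN := H.potentialBound_nonneg
  refine ⟨θ⁻¹ * (M + K / 2) * (1 + 2 * r) + k * (Real.pi / 2) * C, ?_⟩
  filter_upwards [hfb.2] with x hx
  have hx1 : 1 ≤ 1 + ‖x‖ := le_add_of_nonneg_right (norm_nonneg x)
  refine (norm_sub_le _ _).trans (add_le_add ?_ ((le_mul_of_one_le_right (norm_nonneg _) hx1).trans
    (norm_arctanTruncation_smul_mul_le hk.le hx1 (hC r hr x) _)))
  have hτ := dilatedBump_mul_deriv_arctanTruncation_mem_Icc hk.ne' r x (f x)
  rw [norm_neg, norm_smul, Real.norm_of_nonneg hτ.1]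
  rcases le_total (2 * r) ‖x‖ with hxr | hxr
  · rw [dilatedBump_eq_zero (one_pos.trans_le hr) hxr, zero_mul, zero_mul]
    positivity
  · calc _ ≤ ‖b x‖ := mul_le_of_le_one_left (norm_nonneg _) hτ.2
      _ ≤ θ⁻¹ * (M + K / 2) * (1 + ‖x‖) := H.norm_le_of_apply_eq hx
      _ ≤ θ⁻¹ * (M + K / 2) * (1 + 2 * r) := by gcongr

theorem norm_mul_norm_add_le_of_apply_eq {x b w z : ℝ^l}
    (hb : c x b = a x - ((1 : ℝ) / 2) • matDiv c x) {W : ℝ} (hw : ‖w‖ * (1 + ‖x‖) ≤ W) :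
    ‖z‖ * ‖w‖ / 2 + ‖b‖ * ‖w‖ + ‖w‖ ^ 2 / 2 ≤ θ⁻¹ * (M + K / 2) * W + W ^ 2 + ‖z‖ ^ 2 := by
  have hwW : ‖w‖ ≤ W := (le_mul_of_one_le_right (norm_nonneg _)
    (le_add_of_nonneg_right (norm_nonneg x))).trans hw
  have hbw : ‖b‖ * ‖w‖ ≤ θ⁻¹ * (M + K / 2) * W := by
    refine (mul_le_mul_of_nonneg_right (H.norm_le_of_apply_eq hb) (norm_nonneg _)).trans ?_
    rw [mul_assoc, mul_comm (1 + ‖x‖)]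
    exact mul_le_mul_of_nonneg_left hw H.potentialBound_nonneg
  have hsq : ‖w‖ ^ 2 ≤ W ^ 2 := by gcongr
  linarith [sq_nonneg (‖z‖ - ‖w‖), sq_nonneg ‖z‖, sq_nonneg ‖w‖]

/- The gradient of the cutoff decays like `1 / ‖x‖`, which compensates the linear growth of `b`. -/
theorem exists_ae_le_rateDensity_testGradient (hfb : IsDriftPotential c a f b) {k : ℝ}
    (hk : 0 < k) :
    ∃ D, 0 ≤ D ∧ ∀ r, 1 ≤ r → ∀ᵐ x,
      θ / 4 * (dilatedBump r x * deriv (arctanTruncation k) (f x) * ‖b x‖ ^ 2) * m x ≤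
        rateDensity c a m Dm x (testGradient k r f b x) + (θ⁻¹ / 4 * (‖Dm x‖ ^ 2 / m x) +
          (Metric.ball 0 r)ᶜ.indicator (fun x => D * m x + θ⁻¹ * (‖Dm x‖ ^ 2 / m x)) x) := by
  obtain ⟨C, hC⟩ := exists_norm_gradient_dilatedBump_mul_le (ℝ^l)
  have hC0 : 0 ≤ C := le_trans (by positivity) (hC 1 le_rfl 0)
  have hN := H.potentialBound_nonneg
  have hθ : 0 ≤ θ⁻¹ := inv_nonneg.2 H.theta_pos.le
  set W := k * (Real.pi / 2) * C
  refine ⟨θ⁻¹ * (θ⁻¹ * (M + K / 2) * W + W ^ 2), by positivity, fun r hr => ?_⟩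
  filter_upwards [hfb.2, H.ae_exists_grad_eq_smul] with x hx ⟨z, hz, hz_sq⟩
  have hτ := dilatedBump_mul_deriv_arctanTruncation_mem_Icc hk.ne' r x (f x)
  set w := arctanTruncation k (f x) • ∇ (dilatedBump r) x
  refine (H.le_rateDensity_of_apply_eq (w := w) hx hz hτ.1 hτ.2).trans (add_le_add_right ?_ _)
  rw [hz_sq]
  by_cases hxr : x ∈ Metric.ball 0 r
  · have hw : w = 0 := by
      rw [← smul_zero (arctanTruncation k (f x)), ← gradient_dilatedBump_eq_zero_of_norm_lt
        (one_pos.trans_le hr) (mem_ball_zero_iff.1 hxr)]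
    rw [indicator_of_notMem (notMem_compl_iff.2 hxr), hw, norm_zero]
    linarith
  · have hw : ‖w‖ * (1 + ‖x‖) ≤ W :=
      norm_arctanTruncation_smul_mul_le hk.le (le_add_of_nonneg_right (norm_nonneg x)) (hC r hr x) _
    rw [indicator_of_mem hxr, hz_sq]
    linarith [mul_le_mul_of_nonneg_left (H.norm_mul_norm_add_le_of_apply_eq (z := z) hx hw)
      (mul_nonneg (H.nonneg x) hθ)]

theorem exists_lintegral_dilatedBump_mul_le (hfb : IsDriftPotential c a f b) {k : ℝ} (hk : 0 < k) :
    ∃ D, 0 ≤ D ∧ ∀ r, 1 ≤ r →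
      ∫⁻ x, ENNReal.ofReal
          (θ / 4 * (dilatedBump r x * deriv (arctanTruncation k) (f x) * ‖b x‖ ^ 2) * m x) ≤
        rate c a m Dm + ((∫⁻ x, ENNReal.ofReal (θ⁻¹ / 4 * (‖Dm x‖ ^ 2 / m x))) +
          ∫⁻ x in (Metric.ball 0 r)ᶜ, ENNReal.ofReal (D * m x + θ⁻¹ * (‖Dm x‖ ^ 2 / m x))) := by
  obtain ⟨D, hD, hle⟩ := H.exists_ae_le_rateDensity_testGradient hfb hk
  refine ⟨D, hD, fun r hr => ?_⟩
  have hθ := H.theta_pos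
  have hr0 : 0 < r := one_pos.trans_le hr
  obtain ⟨B, hB⟩ := H.exists_ae_norm_testGradient_le hfb hk hr
  have hgrad := hasWeakGrad_testGradient hk.ne' r hfb.1
  have hsupp : HasCompactSupport fun x => -(dilatedBump r x * arctanTruncation k (f x)) :=
    (hasCompactSupport_dilatedBump hr0).mul_right.neg
  have hF := H.aestronglyMeasurable_norm_sq_div
  have hE : AEStronglyMeasurable fun x => D * m x + θ⁻¹ * (‖Dm x‖ ^ 2 / m x) :=
    (H.integrable.aestronglyMeasurable.const_mul D).add (hF.const_mul _)
  have hint : Integrable fun x => rateDensity c a m Dm x (testGradient k r f b x) :=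
    H.integrable_rateDensity hgrad.2.1.aestronglyMeasurable hB (isCompact_closedBall 0 (2 * r))
      (ae_of_all _ fun x => testGradient_eq_zero k hr0 f b)
  refine (lintegral_ofReal_le_ofReal_integral_add (ae_of_all _ fun x => ?_) hint
    ((hF.const_mul _).add (hE.indicator measurableSet_ball.compl))
    (ae_of_all _ fun x => ?_) (hle r hr)).trans
      (add_le_add (H.ofReal_integral_rateDensity_le_rate hgrad hsupp hB) ?_)
  · have := H.nonneg x
    have := (dilatedBump_mul_deriv_arctanTruncation_mem_Icc hk.ne' r x (f x)).1
    positivity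
  · have := H.nonneg x
    exact add_nonneg (by positivity) (indicator_nonneg (fun x _ => by
      have := H.nonneg x; positivity) x)
  · rw [← lintegral_indicator measurableSet_ball.compl,
      ← lintegral_add_left' (hF.const_mul _).aemeasurable.ennreal_ofReal]
    refine lintegral_mono fun x => ENNReal.ofReal_add_le.trans_eq ?_
    by_cases hx : x ∈ (Metric.ball (0 : ℝ^l) r)ᶜ <;> simp [hx]

theorem lintegral_truncated_norm_sq_le (hfb : IsDriftPotential c a f b) {k : ℝ} (hk : 0 < k) :
    ∫⁻ x, ENNReal.ofReal (θ / 4 * (deriv (arctanTruncation k) (f x) * ‖b x‖ ^ 2) * m x) ≤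
      rate c a m Dm + ∫⁻ x, ENNReal.ofReal (θ⁻¹ / 4 * (‖Dm x‖ ^ 2 / m x)) := by
  have hθ := H.theta_pos
  rcases eq_or_ne (fisherInformation m Dm) ⊤ with htop | hfin
  · simp_rw [ENNReal.ofReal_mul (by positivity : 0 ≤ θ⁻¹ / 4)]
    rw [lintegral_const_mul' _ _ ENNReal.ofReal_ne_top, ← fisherInformation, htop,
      ENNReal.mul_top (by simpa using hθ), add_top]
    exact le_top
  obtain ⟨D, hD, hle⟩ := H.exists_lintegral_dilatedBump_mul_le hfb hk
  have hE : ∫⁻ x, ENNReal.ofReal (D * m x + θ⁻¹ * (‖Dm x‖ ^ 2 / m x)) ≠ ⊤ :=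
    ne_top_of_le_ne_top (by finiteness [hfin])
      (H.lintegral_ofReal_mul_add_mul_le hD (inv_nonneg.2 hθ.le) _)
  refine lintegral_le_of_ae_tendsto (fun n : ℕ => ?_) (ae_of_all _ fun x => ?_)
    (fun n => hle ((n + 1 : ℕ) : ℝ) (by simp)) ?_
  · exact ((((((contDiff_dilatedBump _).continuous.aestronglyMeasurable.mul
      (hfb.aestronglyMeasurable_deriv_arctanTruncation k)).mul
        (hfb.1.2.1.aestronglyMeasurable.norm.pow 2)).const_mul _).mul
          H.integrable.aestronglyMeasurable).aemeasurable.ennreal_ofReal)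
  · refine tendsto_const_nhds.congr' ?_
    filter_upwards [eventually_ge_atTop ⌈‖x‖⌉₊] with n hn
    rw [dilatedBump_eq_one (by positivity) ((Nat.ceil_le.1 hn).trans (by simp)), one_mul]
  · have htail := (tendsto_add_atTop_iff_nat 1).2 (tendsto_setLIntegral_compl_ball hE 0)
    simpa using (htail.const_add _).const_add (rate c a m Dm)

theorem lintegral_norm_sq_le_of_isDriftPotential (hfb : IsDriftPotential c a f b) :
    ∫⁻ x, ENNReal.ofReal (θ / 4 * ‖b x‖ ^ 2 * m x) ≤
      rate c a m Dm + ∫⁻ x, ENNReal.ofReal (θ⁻¹ / 4 * (‖Dm x‖ ^ 2 / m x)) := by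
  refine lintegral_le_of_ae_tendsto (fun n : ℕ => ?_) (ae_of_all _ fun x => ?_)
    (fun n : ℕ => H.lintegral_truncated_norm_sq_le hfb n.cast_add_one_pos) tendsto_const_nhds
  · exact ((((hfb.aestronglyMeasurable_deriv_arctanTruncation _).mul
      (hfb.1.2.1.aestronglyMeasurable.norm.pow 2)).const_mul _).mul
        H.integrable.aestronglyMeasurable).aemeasurable.ennreal_ofReal
  · have hk : Tendsto (fun n : ℕ => (n : ℝ) + 1) atTop atTop :=
      tendsto_natCast_atTop_atTop.atTop_add tendsto_const_nhds
    have hlim := ((((tendsto_deriv_arctanTruncation_atTop (f x)).comp hk).mul_const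
      (‖b x‖ ^ 2)).const_mul (θ / 4)).mul_const (m x)
    rw [one_mul] at hlim
    exact (ENNReal.continuous_ofReal.tendsto _).comp hlim

end IsAdmissible

theorem exists_lintegral_drift_sq_le_of_isDriftPotential (l : ℕ) (θ M K : ℝ) :
    ∃ C : ℝ, ∀ {c : ℝ^l → (ℝ^l →L[ℝ] ℝ^l)} {a : ℝ^l → ℝ^l} {m : ℝ^l → ℝ} {Dm : ℝ^l → ℝ^l}
      {f : ℝ^l → ℝ} {b : ℝ^l → ℝ^l}, IsAdmissible θ M K c a m Dm → IsDriftPotential c a f b →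
        ∫⁻ x, ENNReal.ofReal (‖a x‖ ^ 2 * m x) ≤
          ENNReal.ofReal C * (rate c a m Dm + fisherInformation m Dm + 1) := by
  refine ⟨_, fun {c a m Dm f b} H hfb => H.lintegral_drift_sq_le
    (v := fun x => θ / 4 * ‖b x‖ ^ 2 * m x) (A := 8 * θ⁻¹ ^ 3) (D := K ^ 2 / 2) (α := 0)
    (β := θ⁻¹ / 4) ?_ (by positivity) le_rfl ?_ (hfb.2.mono fun x hx => ?_)
    (by simpa only [zero_mul, zero_add] using H.lintegral_norm_sq_le_of_isDriftPotential hfb)⟩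
  · have := H.theta_pos
    positivity
  · have := H.theta_pos
    positivity
  · have := H.theta_pos
    calc ‖a x‖ ^ 2 * m x ≤ (2 * θ⁻¹ ^ 2 * ‖b x‖ ^ 2 + K ^ 2 / 2) * m x :=
          mul_le_mul_of_nonneg_right (H.norm_drift_sq_le_of_apply_eq hx) (H.nonneg x)
      _ = _ := by field_simp; ring

end GradientDrift

theorem exists_lintegral_drift_sq_le (l : ℕ) (θ M K : ℝ) {ε : ℝ} (hε : 0 < ε) (R : ℝ) :
    ∃ C : ℝ, ∀ {c : ℝ^l → (ℝ^l →L[ℝ] ℝ^l)} {a : ℝ^l → ℝ^l} {m : ℝ^l → ℝ} {Dm : ℝ^l → ℝ^l},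
      IsAdmissible θ M K c a m Dm → (IsDissipative ε R a ∨ ∃ f b, IsDriftPotential c a f b) →
        ∫⁻ x, ENNReal.ofReal (‖a x‖ ^ 2 * m x) ≤
          ENNReal.ofReal C * (rate c a m Dm + fisherInformation m Dm + 1) := by
  obtain ⟨C₁, hC₁⟩ := exists_lintegral_drift_sq_le_of_isDissipative (l := l) θ M K hε R
  obtain ⟨C₂, hC₂⟩ := exists_lintegral_drift_sq_le_of_isDriftPotential l θ M K
  refine ⟨max C₁ C₂, fun H hcase => ?_⟩
  rcases hcase with ha | ⟨f, b, hfb⟩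
  · exact (hC₁ H ha).trans (by gcongr; exact le_max_left _ _)
  · exact (hC₂ H hfb).trans (by gcongr; exact le_max_right _ _)

theorem drift_square_integrable_general {S : Type*} [MeasurableSpace S] {μ : Measure S}
    [IsFiniteMeasure μ] {θ M K ε R : ℝ} (hε : 0 < ε) {c : S → ℝ^l → (ℝ^l →L[ℝ] ℝ^l)}
    {a : S → ℝ^l → ℝ^l} {m : S → ℝ^l → ℝ} {Dm : S → ℝ^l → ℝ^l}
    (hadm : ∀ᵐ s ∂μ, IsAdmissible θ M K (c s) (a s) (m s) (Dm s))
    (hfisher_meas : AEMeasurable (fun s => fisherInformation (m s) (Dm s)) μ)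
    (hfisher : ∫⁻ s, fisherInformation (m s) (Dm s) ∂μ < ⊤)
    (hrate : ∫⁻ s, rate (c s) (a s) (m s) (Dm s) ∂μ < ⊤)
    (hcase : ∀ᵐ s ∂μ, IsDissipative ε R (a s) ∨ ∃ f b, IsDriftPotential (c s) (a s) f b) :
    ∫⁻ s, (∫⁻ x, ENNReal.ofReal (‖a s x‖ ^ 2 * m s x)) ∂μ < ⊤ := by
  obtain ⟨C, hC⟩ := exists_lintegral_drift_sq_le l θ M K hε R
  calc ∫⁻ s, (∫⁻ x, ENNReal.ofReal (‖a s x‖ ^ 2 * m s x)) ∂μ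
      ≤ ∫⁻ s, ENNReal.ofReal C *
          (rate (c s) (a s) (m s) (Dm s) + fisherInformation (m s) (Dm s) + 1) ∂μ :=
        lintegral_mono_ae (by filter_upwards [hadm, hcase] with s using hC)
    _ = ENNReal.ofReal C * (∫⁻ s, rate (c s) (a s) (m s) (Dm s) ∂μ +
          ∫⁻ s, fisherInformation (m s) (Dm s) ∂μ + μ univ) := by
        rw [lintegral_const_mul' _ _ ENNReal.ofReal_ne_top, lintegral_add_right _ measurable_const,
          lintegral_add_right' _ hfisher_meas, lintegral_one]
    _ < ⊤ := by finiteness [hrate.ne, hfisher.ne]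

/-- Lemma `le:gradient` of the paper: under either a strengthened stability condition or
a gradient-type condition on the drift, finiteness of the variational functional implies
square integrability of the drift against the density:
`∫₀ᵗ∫ |a_s(x)|² m_s(x) dx ds < ∞`. -/
theorem drift_square_integrable
    (l : ℕ) (t θ M L : ℝ)
    (ht : 0 < t) (hθ0 : 0 < θ) (hθ1 : θ ≤ 1) (hM : 0 < M) (hL : 0 < L)
    (c : ℝ → EuclideanSpace ℝ (Fin l) →
        (EuclideanSpace ℝ (Fin l) →L[ℝ] EuclideanSpace ℝ (Fin l)))
    (a : ℝ → EuclideanSpace ℝ (Fin l) → EuclideanSpace ℝ (Fin l))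
    (m : ℝ → EuclideanSpace ℝ (Fin l) → ℝ)
    (Dm : ℝ → EuclideanSpace ℝ (Fin l) → EuclideanSpace ℝ (Fin l))
    -- measurability
    (hc_meas : ∀ y, Measurable (fun p : ℝ × EuclideanSpace ℝ (Fin l) => (c p.1 p.2) y))
    (ha_meas : Measurable (fun p : ℝ × EuclideanSpace ℝ (Fin l) => a p.1 p.2))
    (hm_meas : Measurable (fun p : ℝ × EuclideanSpace ℝ (Fin l) => m p.1 p.2))
    (hDm_meas : Measurable (fun p : ℝ × EuclideanSpace ℝ (Fin l) => Dm p.1 p.2))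
    -- symmetry and uniform ellipticity of `c`
    (hc_symm : ∀ s ∈ Set.Icc (0 : ℝ) t, ∀ x y y', ⟪c s x y, y'⟫ = ⟪y, c s x y'⟫)
    (hc_ell : ∀ s ∈ Set.Icc (0 : ℝ) t, ∀ x y,
      θ * ‖y‖ ^ 2 ≤ ⟪c s x y, y⟫ ∧ ⟪c s x y, y⟫ ≤ θ⁻¹ * ‖y‖ ^ 2)
    -- `c_s` of class `C¹` with first derivatives bounded uniformly over `s ∈ [0,t]`
    (hc_C1 : ∀ s ∈ Set.Icc (0 : ℝ) t, ContDiff ℝ 1 (c s))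
    (hc_deriv_bd : ∃ Kc : ℝ, ∀ s ∈ Set.Icc (0 : ℝ) t, ∀ x, ‖fderiv ℝ (c s) x‖ ≤ Kc)
    -- linear growth of the drift
    (ha_growth : ∀ s ∈ Set.Icc (0 : ℝ) t, ∀ x, ‖a s x‖ ≤ M * (1 + ‖x‖))
    -- `m_s` a probability density of class `W^{1,1}_loc` for a.e. `s`
    (hm : ∀ᵐ s ∂(volume.restrict (Set.Icc (0 : ℝ) t)),
      (∀ x, 0 ≤ m s x) ∧ (∫ x, m s x) = 1 ∧ HasWeakGrad (m s) (Dm s))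
    -- global integrability of `|Dm|²/m`
    (hDm_int : (∫⁻ s in Set.Icc (0 : ℝ) t,
      ∫⁻ x, ENNReal.ofReal (‖Dm s x‖ ^ 2 / m s x)) < ⊤)
    -- the variational functional is bounded by `L`, the supremum being over compactly
    -- supported Lipschitz functions `h` with a.e. gradient `∇h`
    (hvar : (∫⁻ s in Set.Icc (0 : ℝ) t,
      ⨆ h : {h : EuclideanSpace ℝ (Fin l) → ℝ //
          (∃ K : NNReal, LipschitzWith K h) ∧ HasCompactSupport h},
        ENNReal.ofReal (∫ x,
          (⟪gradient h.1 x,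
              ((1 : ℝ) / 2) • (m s x • matDiv (c s) x + (c s x) (Dm s x)) -
                m s x • a s x⟫ -
            (1 / 2) * ⟪(c s x) (gradient h.1 x), gradient h.1 x⟫ * m s x))) ≤
      ENNReal.ofReal L)
    -- additionally, either the strengthened stability condition (i) ...
    (hcase : (∃ ε : ℝ, 0 < ε ∧ ∃ R : ℝ, ∀ x : EuclideanSpace ℝ (Fin l), R ≤ ‖x‖ →
        ∀ s ∈ Set.Icc (0 : ℝ) t, ⟪a s x, x⟫ ≤ -ε * ‖x‖ ^ 2) ∨
      -- ... or the gradient condition (ii)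
      (∀ᵐ s ∂(volume.restrict (Set.Icc (0 : ℝ) t)),
        ∃ (ahat : EuclideanSpace ℝ (Fin l) → ℝ)
          (gahat : EuclideanSpace ℝ (Fin l) → EuclideanSpace ℝ (Fin l)),
          HasWeakGrad ahat gahat ∧
          ∀ᵐ x ∂(volume : Measure (EuclideanSpace ℝ (Fin l))),
            (c s x) (gahat x) = a s x - ((1 : ℝ) / 2) • matDiv (c s) x)) :
    (∫⁻ s in Set.Icc (0 : ℝ) t,
      ∫⁻ x, ENNReal.ofReal (‖a s x‖ ^ 2 * m s x)) < ⊤ := by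
  obtain ⟨Kc, hKc⟩ := hc_deriv_bd
  have hmem : ∀ᵐ s ∂volume.restrict (Icc 0 t), s ∈ Icc 0 t := ae_restrict_mem measurableSet_Icc
  have hadm : ∀ᵐ s ∂volume.restrict (Icc 0 t),
      IsAdmissible θ M (l * Kc) (c s) (a s) (m s) (Dm s) := by
    filter_upwards [hmem, hm] with s hs ⟨hm0, hm1, hDm⟩
    exact ⟨fun x => ⟨hθ0, hc_symm s hs x, fun y => (hc_ell s hs x y).1,
      fun y => (hc_ell s hs x y).2⟩, hc_C1 s hs, fun x => norm_matDiv_le (hKc s hs x),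
      ha_meas.of_uncurry_left, ha_growth s hs, hm0, hm1, hDm⟩
  have hfisher_meas : Measurable fun s => fisherInformation (m s) (Dm s) :=
    ((hDm_meas.norm.pow_const 2).div hm_meas).ennreal_ofReal.lintegral_prod_right'
  have hrate : ∫⁻ s in Icc 0 t, rate (c s) (a s) (m s) (Dm s) < ⊤ :=
    hvar.trans_lt ENNReal.ofReal_lt_top
  rcases hcase with ⟨ε, hε, R, ha⟩ | hpot
  · exact drift_square_integrable_general hε hadm hfisher_meas.aemeasurable hDm_int hrate
      (hmem.mono fun s hs => .inl fun x hx => ha x hx s hs)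
  · exact drift_square_integrable_general (R := 0) one_pos hadm hfisher_meas.aemeasurable hDm_int
      hrate (hpot.mono fun s hs => .inr hs)
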